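/- Assume the nonlinearity N is of non-parabolic resonance type, i.e. P_N(f) = 0 for every f ∈ C^∞(𝕋). Let T > 0, let φ ∈ H^{12}(𝕋) be real-valued, and let u₁, u₂ ∈ C([−T,T]; L²(𝕋)) ∩ L^∞([−T,T]; H^{12}(𝕋)) be real-valued solutions (in the sense of distributions) of ∂_t u + γ₀∂_x⁵u + γ₁∂_x³u + γ₂∂_x u = N(∂_x³u,∂_x²u,∂_xu,u) on [−T,T]×𝕋 with u₁(0,·) = u₂(0,·) = φ. Then u₁(t) = u₂(t) for all t ∈ [−T,T]. -/

import Mathlib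

/- Fifth order dispersive equations on the torus: uniqueness for
   non-parabolic resonance type nonlinearities. -/

namespace FifthOrderStmt1

/-- Fourier coefficient of a `2π`-periodic function `f : ℝ → ℝ`:
`f̂(k) = (1/2π) ∫_0^{2π} f(x) e^{-ikx} dx`. -/
noncomputable def fc (f : ℝ → ℝ) (k : ℤ) : ℂ :=
  (Complex.ofReal (2 * Real.pi))⁻¹ *
    ∫ x in (0:ℝ)..(2 * Real.pi), (f x : ℂ) * Complex.exp (-Complex.I * (k : ℂ) * (x : ℂ))

/-- Sobolev norm `‖f‖_{H^s} = (Σ_k (1+k²)^s |f̂(k)|²)^{1/2}`. -/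
noncomputable def hsNorm (s : ℕ) (f : ℝ → ℝ) : ℝ :=
  Real.sqrt (∑' k : ℤ, (1 + (k : ℝ) ^ 2) ^ s * ‖fc f k‖ ^ 2)

/-- `f` belongs to `H^s(𝕋)` (continuous representative, `2π`-periodic, finite `H^s` norm). -/
def MemHs (s : ℕ) (f : ℝ → ℝ) : Prop :=
  Continuous f ∧ Function.Periodic f (2 * Real.pi) ∧
    Summable (fun k : ℤ => (1 + (k : ℝ) ^ 2) ^ s * ‖fc f k‖ ^ 2)

/-- The nonlinearity `N(∂_x³f, ∂_x²f, ∂_xf, f) = Σ_j λ_j (∂_x³f)^{a_j}(∂_x²f)^{b_j}(∂_xf)^{c_j}f^{d_j}`. -/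
noncomputable def Nfun (j0 : ℕ) (lam : Fin j0 → ℝ) (a b c d : Fin j0 → ℕ)
    (f : ℝ → ℝ) (x : ℝ) : ℝ :=
  ∑ j : Fin j0, lam j * (iteratedDeriv 3 f x) ^ (a j) * (iteratedDeriv 2 f x) ^ (b j) *
    (deriv f x) ^ (c j) * (f x) ^ (d j)

/-- The functional `P_N(f) = Σ_j (λ_j b_j / 2π) ∫_𝕋 (∂_x³f)^{a_j}(∂_x²f)^{b_j-1}(∂_xf)^{c_j}f^{d_j} dx`. -/
noncomputable def PN (j0 : ℕ) (lam : Fin j0 → ℝ) (a b c d : Fin j0 → ℕ) (f : ℝ → ℝ) : ℝ :=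
  ∑ j : Fin j0, (lam j * (b j : ℝ) / (2 * Real.pi)) *
    ∫ x in (0:ℝ)..(2 * Real.pi),
      (iteratedDeriv 3 f x) ^ (a j) * (iteratedDeriv 2 f x) ^ (b j - 1) *
        (deriv f x) ^ (c j) * (f x) ^ (d j)

/-- `u` is a (distributional) solution of
`∂_t u + γ₀∂_x⁵u + γ₁∂_x³u + γ₂∂_x u = N(∂_x³u,∂_x²u,∂_xu,u)` on `[T₁,T₂] × 𝕋`:
each `u(t)` is `2π`-periodic and `C³` in `x` (so that `N(u)` is defined pointwise), and for every
smooth test function `ψ`, `2π`-periodic in `x` and compactly supported in time inside `(T₁,T₂)`,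
the integrated-by-parts identity holds. -/
def IsSolution (γ0 γ1 γ2 : ℝ) (j0 : ℕ) (lam : Fin j0 → ℝ) (a b c d : Fin j0 → ℕ)
    (T1 T2 : ℝ) (u : ℝ → ℝ → ℝ) : Prop :=
  (∀ t ∈ Set.Icc T1 T2, ContDiff ℝ 3 (u t) ∧ Function.Periodic (u t) (2 * Real.pi)) ∧
  ∀ ψ : ℝ → ℝ → ℝ, ContDiff ℝ (⊤ : ℕ∞) (Function.uncurry ψ) →
    (∀ t : ℝ, Function.Periodic (ψ t) (2 * Real.pi)) →
    (∀ t : ℝ, t ∉ Set.Ioo T1 T2 → ∀ x : ℝ, ψ t x = 0) →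
    (∫ t in T1..T2, ∫ x in (0:ℝ)..(2 * Real.pi),
      (u t x * (deriv (fun τ : ℝ => ψ τ x) t
        + γ0 * iteratedDeriv 5 (ψ t) x
        + γ1 * iteratedDeriv 3 (ψ t) x
        + γ2 * deriv (ψ t) x)
      + Nfun j0 lam a b c d (u t) x * ψ t x)) = 0

/-- `t ↦ u(t)` is continuous from `A` into `H^s(𝕋)`. -/
def ContInHs (s : ℕ) (A : Set ℝ) (u : ℝ → ℝ → ℝ) : Prop :=
  ∀ t₀ ∈ A, ∀ ε > 0, ∃ δ > 0, ∀ t ∈ A, |t - t₀| < δ →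
    hsNorm s (fun x => u t x - u t₀ x) < ε

/-!
Two solutions bounded in `H¹²` have jointly continuous `x`-derivatives up to order eight, so the
equation holds pointwise. Their difference solves a linear equation
`∂ₜw = -γ₀ ∂ₓ⁵w + c₃ ∂ₓ³w + c₂ ∂ₓ²w + c₁ ∂ₓw + c₀ w`, whose coefficients come from averaging the
derivatives of `N` over the segment between the solutions. In the time derivative of
`∫ (∂ₓw)² + F w²` the only term not bounded by the energy itself is a multiple of `(∂ₓ²w)²`, and
it disappears when `F` solves a first-order equation `(5γ₀/2) ∂ₓF = c₂ + ∂ₓ(⋯)`. A periodic `F`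
exists because `c₂` has mean zero: this is the resonance condition, carried over from smooth to
`C³` functions by mollification. Adding a constant makes `F ≥ 1`, and Grönwall's inequality
concludes. The substitution `t = T sin s` turns the closed two-sided time interval into a forward
evolution on all of `ℝ`, with no endpoints to treat separately.
-/

open Function (Periodic uncurry)

section ParametricIntegral

theorem hasDerivAt_integral_of_continuous {f f' : ℝ → ℝ → ℝ} (a b : ℝ)
    (hf : Continuous (uncurry f)) (hf' : Continuous (uncurry f'))
    (h : ∀ x y, HasDerivAt (fun z => f z y) (f' x y) x) (x : ℝ) :
    HasDerivAt (fun z => ∫ y in a..b, f z y) (∫ y in a..b, f' x y) x := by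
  have hK : IsCompact (Set.Icc (x - 1) (x + 1) ×ˢ Set.uIcc a b) :=
    isCompact_Icc.prod isCompact_uIcc
  obtain ⟨C, hC⟩ := hK.exists_bound_of_continuousOn hf'.continuousOn
  have hfz (z : ℝ) : Continuous (f z) := hf.comp (Continuous.prodMk_right z)
  have hf'x : Continuous (f' x) := hf'.comp (Continuous.prodMk_right x)
  exact (intervalIntegral.hasDerivAt_integral_of_dominated_loc_of_deriv_le
    (bound := fun _ => C) (Icc_mem_nhds (sub_one_lt x) (lt_add_one x))
    (.of_forall fun z => (hfz z).aestronglyMeasurable)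
    ((hfz x).intervalIntegrable a b) hf'x.aestronglyMeasurable
    (.of_forall fun y hy z hz => hC (z, y) ⟨hz, Set.uIoc_subset_uIcc hy⟩) (by simp)
    (.of_forall fun y _ z _ => h z y)).2

theorem continuous_integral_of_continuous {X : Type*} [TopologicalSpace X] {f : X → ℝ → ℝ}
    (hf : Continuous (uncurry f)) {α β : X → ℝ} (hα : Continuous α) (hβ : Continuous β) :
    Continuous (fun p => ∫ y in α p..β p, f p y) := by
  have hi (p : X) (u v : ℝ) : IntervalIntegrable (f p) MeasureTheory.volume u v :=
    (hf.comp (Continuous.prodMk_right p)).intervalIntegrable u v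
  have hsub : (fun p => ∫ y in α p..β p, f p y) =
      fun p => (∫ y in 0..β p, f p y) - ∫ y in 0..α p, f p y :=
    funext fun p => (intervalIntegral.integral_interval_sub_left (hi p _ _) (hi p _ _)).symm
  rw [hsub]
  exact (intervalIntegral.continuous_parametric_intervalIntegral_of_continuous hf hβ).sub
    (intervalIntegral.continuous_parametric_intervalIntegral_of_continuous hf hα)

theorem integral_integral_swap_of_continuous {F : ℝ → ℝ → ℝ} (hF : Continuous (uncurry F))
    {a b c d : ℝ} (hab : a ≤ b) (hcd : c ≤ d) :
    ∫ t in a..b, ∫ x in c..d, F t x = ∫ x in c..d, ∫ t in a..b, F t x := by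
  simp only [intervalIntegral.integral_of_le hab, intervalIntegral.integral_of_le hcd]
  refine MeasureTheory.integral_integral_swap ?_
  rw [MeasureTheory.Measure.prod_restrict]
  exact (hF.continuousOn.integrableOn_compact (isCompact_Icc.prod isCompact_Icc)).mono_set
    (Set.prod_mono Set.Ioc_subset_Icc_self Set.Ioc_subset_Icc_self)

end ParametricIntegral

/-- Continuous families of `C^n` functions on the line: each `f p` is `n` times differentiable, and
its derivatives up to order `n` are jointly continuous in the parameter and the variable. -/
def ContDiffFamily {P : Type*} [TopologicalSpace P] : ℕ → (P → ℝ → ℝ) → Prop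
  | 0, f => Continuous (uncurry f)
  | n + 1, f => Continuous (uncurry f) ∧ (∀ p, Differentiable ℝ (f p)) ∧
      ContDiffFamily n (fun p => deriv (f p))

namespace ContDiffFamily

variable {P Q ι : Type*} [TopologicalSpace P] [TopologicalSpace Q] {n m k : ℕ} {f g : P → ℝ → ℝ}

protected theorem continuous (hf : ContDiffFamily n f) : Continuous (uncurry f) := by
  cases n with
  | zero => exact hf
  | succ n => exact hf.1

theorem continuous_apply (hf : ContDiffFamily n f) (p : P) : Continuous (f p) :=
  hf.continuous.comp (Continuous.prodMk_right p)

theorem continuous_param (hf : ContDiffFamily n f) (x : ℝ) : Continuous (fun p => f p x) :=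
  hf.continuous.comp (Continuous.prodMk_left x)

protected theorem hasDerivAt (hf : ContDiffFamily (n + 1) f) (p : P) (x : ℝ) :
    HasDerivAt (f p) (deriv (f p) x) x :=
  (hf.2.1 p x).hasDerivAt

protected theorem deriv (hf : ContDiffFamily (n + 1) f) :
    ContDiffFamily n (fun p => deriv (f p)) :=
  hf.2.2

theorem of_hasDerivAt {f' : P → ℝ → ℝ} (hc : Continuous (uncurry f))
    (h : ∀ p x, HasDerivAt (f p) (f' p x) x) (hf' : ContDiffFamily n f') :
    ContDiffFamily (n + 1) f := by
  obtain rfl : (fun p => deriv (f p)) = f' := funext₂ fun p x => (h p x).deriv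
  exact ⟨hc, fun p x => (h p x).differentiableAt, hf'⟩

theorem of_succ (hf : ContDiffFamily (n + 1) f) : ContDiffFamily n f := by
  induction n generalizing f with
  | zero => exact hf.continuous
  | succ n ih => exact ⟨hf.1, hf.2.1, ih hf.deriv⟩

theorem mono (hf : ContDiffFamily n f) (h : m ≤ n) : ContDiffFamily m f := by
  induction n, h using Nat.le_induction with
  | base => exact hf
  | succ n _ ih => exact ih hf.of_succ

theorem of_param {α : P → ℝ} (hα : Continuous α) : ContDiffFamily n (fun p _ => α p) := by
  induction n generalizing α with
  | zero => exact hα.comp continuous_fst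
  | succ n ih =>
    exact of_hasDerivAt (hα.comp continuous_fst) (fun p x => hasDerivAt_const x (α p))
      (ih continuous_const)

theorem add (hf : ContDiffFamily n f) (hg : ContDiffFamily n g) :
    ContDiffFamily n (fun p x => f p x + g p x) := by
  induction n generalizing f g with
  | zero => exact Continuous.add hf hg
  | succ n ih =>
    exact of_hasDerivAt (hf.1.add hg.1) (fun p x => (hf.hasDerivAt p x).add (hg.hasDerivAt p x))
      (ih hf.deriv hg.deriv)

theorem mul (hf : ContDiffFamily n f) (hg : ContDiffFamily n g) :
    ContDiffFamily n (fun p x => f p x * g p x) := by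
  induction n generalizing f g with
  | zero => exact Continuous.mul hf hg
  | succ n ih =>
    exact of_hasDerivAt (hf.1.mul hg.1) (fun p x => (hf.hasDerivAt p x).mul (hg.hasDerivAt p x))
      ((ih hf.deriv hg.of_succ).add (ih hf.of_succ hg.deriv))

theorem const_mul (c : ℝ) (hf : ContDiffFamily n f) : ContDiffFamily n (fun p x => c * f p x) :=
  (of_param continuous_const).mul hf

theorem sub (hf : ContDiffFamily n f) (hg : ContDiffFamily n g) :
    ContDiffFamily n (fun p x => f p x - g p x) := by
  simpa only [neg_one_mul, sub_eq_add_neg] using hf.add (hg.const_mul (-1))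

theorem pow (hf : ContDiffFamily n f) (k : ℕ) : ContDiffFamily n (fun p x => f p x ^ k) := by
  induction k with
  | zero => simpa only [pow_zero] using of_param continuous_const
  | succ k ih => simpa only [pow_succ] using ih.mul hf

theorem sum (s : Finset ι) {F : ι → P → ℝ → ℝ} (hF : ∀ i, ContDiffFamily n (F i)) :
    ContDiffFamily n (fun p x => ∑ i ∈ s, F i p x) := by
  classical
  induction s using Finset.induction_on with
  | empty => simpa only [Finset.sum_empty] using of_param continuous_const
  | insert i s hi ih => simpa only [Finset.sum_insert hi] using (hF i).add ih

theorem comp_param (hf : ContDiffFamily n f) {φ : Q → P} (hφ : Continuous φ) :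
    ContDiffFamily n (fun q => f (φ q)) := by
  induction n generalizing f with
  | zero => exact hf.comp ((hφ.comp continuous_fst).prodMk continuous_snd)
  | succ n ih =>
    exact ⟨hf.1.comp ((hφ.comp continuous_fst).prodMk continuous_snd), fun q => hf.2.1 (φ q),
      ih hf.deriv⟩

protected theorem contDiff (hf : ContDiffFamily n f) (p : P) : ContDiff ℝ n (f p) := by
  induction n generalizing f with
  | zero => exact contDiff_zero.2 (hf.continuous_apply p)
  | succ n ih => exact contDiff_succ_iff_deriv.2 ⟨hf.2.1 p, by simp, ih hf.deriv⟩

theorem of_contDiff {v : ℝ → ℝ} (hv : ContDiff ℝ n v) : ContDiffFamily n (fun _ : P => v) := by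
  induction n generalizing v with
  | zero => exact hv.continuous.comp continuous_snd
  | succ n ih =>
    exact ⟨hv.continuous.comp continuous_snd, fun _ => hv.differentiable (by simp),
      ih (contDiff_succ_iff_deriv.1 hv).2.2⟩

theorem comp_add_right (hf : ContDiffFamily n f) {τ : P → ℝ} (hτ : Continuous τ) :
    ContDiffFamily n (fun p x => f p (x + τ p)) := by
  have hc {g : P → ℝ → ℝ} (hg : Continuous (uncurry g)) :
      Continuous (uncurry fun p x => g p (x + τ p)) :=
    hg.comp (by fun_prop : Continuous fun q : P × ℝ => (q.1, q.2 + τ q.1))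
  induction n generalizing f with
  | zero => exact hc hf
  | succ n ih =>
    exact of_hasDerivAt (hc hf.1) (fun p x => (hf.hasDerivAt p (x + τ p)).comp_add_const x (τ p))
      (ih hf.deriv)

protected theorem iteratedDeriv (hf : ContDiffFamily n f) (h : m + k ≤ n) :
    ContDiffFamily m (fun p => iteratedDeriv k (f p)) := by
  induction k generalizing m with
  | zero =>
    simp only [iteratedDeriv_zero]
    exact hf.mono h
  | succ k ih =>
    simp only [iteratedDeriv_succ]
    exact (ih (m := m + 1) (by omega)).deriv

theorem continuous_iteratedDeriv (hf : ContDiffFamily n f) (h : k ≤ n) :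
    Continuous (fun q : P × ℝ => iteratedDeriv k (f q.1) q.2) :=
  (hf.iteratedDeriv (m := 0) (by omega)).continuous

theorem hasDerivAt_integral {f : P × ℝ → ℝ → ℝ} (hf : ContDiffFamily (n + 1) f) (a b : ℝ)
    (p : P) (x : ℝ) : HasDerivAt (fun x => ∫ y in a..b, f (p, y) x)
      (∫ y in a..b, deriv (f (p, y)) x) x := by
  have hφ : Continuous (fun q : ℝ × ℝ => ((p, q.2), q.1)) := by fun_prop
  exact hasDerivAt_integral_of_continuous (f := fun z y => f (p, y) z)
    (f' := fun z y => deriv (f (p, y)) z) a b (hf.continuous.comp hφ)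
    (hf.deriv.continuous.comp hφ) (fun x y => hf.hasDerivAt (p, y) x) x

protected theorem integral {f : P × ℝ → ℝ → ℝ} (hf : ContDiffFamily n f) {α β : P → ℝ}
    (hα : Continuous α) (hβ : Continuous β) :
    ContDiffFamily n (fun p x => ∫ y in α p..β p, f (p, y) x) := by
  have hc {g : P × ℝ → ℝ → ℝ} (hg : Continuous (uncurry g)) :
      Continuous (uncurry fun p x => ∫ y in α p..β p, g (p, y) x) :=
    continuous_integral_of_continuous (X := P × ℝ) (f := fun q y => g (q.1, y) q.2)
      (hg.comp (by fun_prop : Continuous fun q : (P × ℝ) × ℝ => ((q.1.1, q.2), q.1.2)))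
      (hα.comp continuous_fst) (hβ.comp continuous_fst)
  induction n generalizing f with
  | zero => exact hc hf
  | succ n ih =>
    exact of_hasDerivAt (hc hf.1) (fun p x => hf.hasDerivAt_integral (α p) (β p) p x) (ih hf.deriv)

end ContDiffFamily

section Evolution

variable {w h : ℝ → ℝ → ℝ} {k n : ℕ}

theorem eq_add_integral_of_evolution (hh : ContDiffFamily n h)
    (hw : ∀ s x, HasDerivAt (fun σ => w σ x) (h s x) s) (s : ℝ) :
    w s = fun x => w 0 x + ∫ σ in 0..s, h σ x := by
  ext x
  rw [intervalIntegral.integral_eq_sub_of_hasDerivAt (fun σ _ => hw σ x)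
    ((hh.continuous_param x).intervalIntegrable _ _), add_sub_cancel]

theorem hasDerivAt_deriv_of_evolution (hw : ContDiffFamily 1 w) (hh : ContDiffFamily 1 h)
    (hwh : ∀ s x, HasDerivAt (fun σ => w σ x) (h s x) s) (s x : ℝ) :
    HasDerivAt (fun σ => deriv (w σ) x) (deriv (h s) x) s := by
  have hderiv (s : ℝ) : deriv (w s) x = deriv (w 0) x + ∫ σ in 0..s, deriv (h σ) x := by
    have hparam : HasDerivAt (fun y => ∫ σ in 0..s, h σ y) (∫ σ in 0..s, deriv (h σ) x) x :=
      (hh.comp_param continuous_snd).hasDerivAt_integral 0 s () x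
    conv_lhs => rw [eq_add_integral_of_evolution hh hwh s]
    exact ((hw.hasDerivAt 0 x).add hparam).deriv
  rw [funext hderiv]
  exact ((hh.deriv.continuous_param x).integral_hasStrictDerivAt 0 s).hasDerivAt.const_add _

theorem hasDerivAt_iteratedDeriv_of_evolution (hw : ContDiffFamily k w) (hh : ContDiffFamily k h)
    (hwh : ∀ s x, HasDerivAt (fun σ => w σ x) (h s x) s) (s x : ℝ) :
    HasDerivAt (fun σ => iteratedDeriv k (w σ) x) (iteratedDeriv k (h s) x) s := by
  induction k generalizing s x with
  | zero => simpa only [iteratedDeriv_zero] using hwh s x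
  | succ k ih =>
    simp only [iteratedDeriv_succ]
    exact hasDerivAt_deriv_of_evolution (hw.iteratedDeriv (by omega))
      (hh.iteratedDeriv (by omega)) (ih hw.of_succ hh.of_succ) s x

theorem contDiffFamily_iteratedDeriv_time (hw : ContDiffFamily k w) (hh : ContDiffFamily k h)
    (hwh : ∀ s x, HasDerivAt (fun σ => w σ x) (h s x) s) :
    ContDiffFamily 1 (fun x s => iteratedDeriv k (w s) x) :=
  .of_hasDerivAt ((hw.continuous_iteratedDeriv le_rfl).comp continuous_swap)
    (fun x s => hasDerivAt_iteratedDeriv_of_evolution hw hh hwh s x)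
    ((hh.continuous_iteratedDeriv le_rfl).comp continuous_swap)

end Evolution

section PeriodicPrimitive

variable {L : ℝ} {f g : ℝ → ℝ}

theorem periodic_iteratedDeriv (hf : Periodic f L) (k : ℕ) : Periodic (iteratedDeriv k f) L := by
  induction k with
  | zero => simpa only [iteratedDeriv_zero] using hf
  | succ k ih =>
    intro x
    rw [iteratedDeriv_succ, ← deriv_comp_add_const, funext ih]

/-- `f` is exact on the circle of length `L`: it is the derivative of an `L`-periodic function.
Integration by parts says that two expressions differ by an exact one. -/
def HasPeriodicPrimitive (L : ℝ) (f : ℝ → ℝ) : Prop :=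
  ∃ g : ℝ → ℝ, Periodic g L ∧ ∀ x, HasDerivAt g (f x) x

namespace HasPeriodicPrimitive

theorem congr (hf : HasPeriodicPrimitive L f) (h : ∀ x, f x = g x) : HasPeriodicPrimitive L g :=
  funext h ▸ hf

theorem add (hf : HasPeriodicPrimitive L f) (hg : HasPeriodicPrimitive L g) :
    HasPeriodicPrimitive L (fun x => f x + g x) := by
  obtain ⟨F, hF, hFf⟩ := hf
  obtain ⟨G, hG, hGg⟩ := hg
  exact ⟨F + G, hF.add hG, fun x => (hFf x).add (hGg x)⟩

theorem const_mul (c : ℝ) (hf : HasPeriodicPrimitive L f) :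
    HasPeriodicPrimitive L (fun x => c * f x) := by
  obtain ⟨F, hF, hFf⟩ := hf
  exact ⟨fun x => c * F x, fun x => congrArg (c * ·) (hF x), fun x => (hFf x).const_mul c⟩

theorem sub (hf : HasPeriodicPrimitive L f) (hg : HasPeriodicPrimitive L g) :
    HasPeriodicPrimitive L (fun x => f x - g x) :=
  (hf.add (hg.const_mul (-1))).congr fun x => by ring

theorem integral_eq_zero (hf : HasPeriodicPrimitive L f) (hc : Continuous f) :
    ∫ x in 0..L, f x = 0 := by
  obtain ⟨F, hF, hFf⟩ := hf
  rw [intervalIntegral.integral_eq_sub_of_hasDerivAt (fun x _ => hFf x)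
    (hc.intervalIntegrable _ _), ← zero_add L, hF 0, sub_self]

theorem integral_eq (h : HasPeriodicPrimitive L (fun x => f x - g x)) (hf : Continuous f)
    (hg : Continuous g) : ∫ x in 0..L, f x = ∫ x in 0..L, g x := by
  rw [← sub_eq_zero, ← intervalIntegral.integral_sub (hf.intervalIntegrable _ _)
    (hg.intervalIntegrable _ _)]
  exact h.integral_eq_zero (hf.sub hg)

end HasPeriodicPrimitive

/-- `w k` plays the role of the `k`-th derivative of an `L`-periodic function, for `k ≤ n`. -/
structure PeriodicJet (L : ℝ) (n : ℕ) (w : ℕ → ℝ → ℝ) : Prop where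
  periodic : ∀ k, Periodic (w k) L
  hasDerivAt : ∀ k < n, ∀ x, HasDerivAt (w k) (w (k + 1) x) x

theorem periodicJet_iteratedDeriv {n : ℕ} (hf : ContDiff ℝ n f) (hp : Periodic f L) :
    PeriodicJet L n (fun k => iteratedDeriv k f) where
  periodic := periodic_iteratedDeriv hp
  hasDerivAt k hk x := by
    rw [iteratedDeriv_succ]
    exact (hf.differentiable_iteratedDeriv k (by exact_mod_cast hk) x).hasDerivAt

namespace PeriodicJet

variable {n m : ℕ} {p u v w : ℕ → ℝ → ℝ}

theorem shift (hw : PeriodicJet L n w) (j : ℕ) (h : m + j ≤ n) :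
    PeriodicJet L m (fun k => w (k + j)) where
  periodic k := hw.periodic (k + j)
  hasDerivAt k hk x := by
    rw [Nat.add_right_comm]
    exact hw.hasDerivAt (k + j) (by omega) x

theorem mono (hw : PeriodicJet L n w) (h : m ≤ n) : PeriodicJet L m w := hw.shift 0 h

theorem exact_deriv_mul (hu : PeriodicJet L 1 u) (hv : PeriodicJet L 1 v) :
    HasPeriodicPrimitive L (fun x => u 1 x * v 0 x + u 0 x * v 1 x) :=
  ⟨u 0 * v 0, (hu.periodic 0).mul (hv.periodic 0), fun x =>
    (hu.hasDerivAt 0 one_pos x).mul (hv.hasDerivAt 0 one_pos x)⟩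

theorem exact_deriv_mul_mul (hp : PeriodicJet L 1 p) (hu : PeriodicJet L 1 u)
    (hv : PeriodicJet L 1 v) : HasPeriodicPrimitive L
      (fun x => p 1 x * (u 0 x * v 0 x) + p 0 x * (u 1 x * v 0 x + u 0 x * v 1 x)) :=
  ⟨p 0 * (u 0 * v 0), (hp.periodic 0).mul ((hu.periodic 0).mul (hv.periodic 0)), fun x =>
    (hp.hasDerivAt 0 one_pos x).mul
      ((hu.hasDerivAt 0 one_pos x).mul (hv.hasDerivAt 0 one_pos x))⟩

theorem exact_mul_one (hp : PeriodicJet L 1 p) (hw : PeriodicJet L 1 w) :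
    HasPeriodicPrimitive L (fun x => p 0 x * (w 0 x * w 1 x) - -(1 / 2 * p 1 x) * w 0 x ^ 2) :=
  ((hp.exact_deriv_mul_mul hw hw).const_mul (1 / 2)).congr fun x => by ring

theorem exact_mul_two (hp : PeriodicJet L 1 p) (hw : PeriodicJet L 2 w) :
    HasPeriodicPrimitive L
      (fun x => p 0 x * (w 0 x * w 2 x) - (-p 1 x * (w 0 x * w 1 x) - p 0 x * w 1 x ^ 2)) :=
  (hp.exact_deriv_mul_mul (hw.mono one_le_two) (hw.shift 1 le_rfl)).congr fun x => by ring

theorem exact_mul_three (hp : PeriodicJet L 2 p) (hw : PeriodicJet L 3 w) :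
    HasPeriodicPrimitive L (fun x => p 0 x * (w 0 x * w 3 x) -
      (p 2 x * (w 0 x * w 1 x) + 3 / 2 * p 1 x * w 1 x ^ 2)) :=
  (((hp.mono one_le_two).exact_deriv_mul_mul (hw.mono (by simp)) (hw.shift 2 le_rfl)).sub
    (((hp.shift 1 le_rfl).exact_mul_two (hw.mono (by simp))).add
      ((hp.mono one_le_two).exact_mul_one (hw.shift 1 (by simp))))).congr fun x => by ring

theorem exact_mul_five (hp : PeriodicJet L 4 p) (hw : PeriodicJet L 5 w) :
    HasPeriodicPrimitive L (fun x => p 0 x * (w 0 x * w 5 x) -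
      (p 4 x * (w 0 x * w 1 x) + 5 / 2 * p 3 x * w 1 x ^ 2 - 5 / 2 * p 1 x * w 2 x ^ 2)) := by
  have hww₅ := (hp.mono (m := 1) (by simp)).exact_deriv_mul_mul (hw.mono (by simp))
    (hw.shift (m := 1) 4 le_rfl)
  have hw₁w₄ := (hp.mono (m := 2) (by simp)).exact_mul_three (hw.shift (m := 3) 1 (by simp))
  have hww₄ := (hp.shift (m := 1) 1 (by simp)).exact_deriv_mul_mul (hw.mono (by simp))
    (hw.shift (m := 1) 3 (by simp))
  have hww₃ := (hp.shift (m := 2) 2 le_rfl).exact_mul_three (hw.mono (by simp))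
  have hw₁w₃ := (hp.shift (m := 1) 1 (by simp)).exact_mul_two (hw.shift (m := 2) 1 (by simp))
  have hw₁w₂ := (hp.shift (m := 1) 2 (by simp)).exact_mul_one (hw.shift (m := 1) 1 (by simp))
  exact (((hww₅.sub hw₁w₄).sub ((hww₄.sub hww₃).sub hw₁w₃)).sub (hw₁w₂.const_mul 2)).congr
    fun x => by ring

theorem exact_two_mul_five (hw : PeriodicJet L 5 w) :
    HasPeriodicPrimitive L (fun x => w 2 x * w 5 x) :=
  (((hw.shift 2 (by simp)).exact_deriv_mul (hw.shift 4 (by simp))).sub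
    (((hw.shift 3 (by simp)).exact_deriv_mul (hw.shift 3 (by simp))).const_mul (1 / 2))).congr
    fun x => by ring

end PeriodicJet

end PeriodicPrimitive

/-- A `ContDiffFamily` all of whose members are `L`-periodic. -/
structure PeriodicFamily {P : Type*} [TopologicalSpace P] (L : ℝ) (n : ℕ) (f : P → ℝ → ℝ) :
    Prop where
  contDiffFamily : ContDiffFamily n f
  periodic : ∀ p, Periodic (f p) L

namespace PeriodicFamily

variable {P : Type*} [TopologicalSpace P] {L : ℝ} {n m k : ℕ} {f g : P → ℝ → ℝ}

theorem mono (hf : PeriodicFamily L n f) (h : m ≤ n) : PeriodicFamily L m f :=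
  ⟨hf.1.mono h, hf.2⟩

theorem of_param {α : P → ℝ} (hα : Continuous α) : PeriodicFamily L n (fun p _ => α p) :=
  ⟨.of_param hα, fun _ _ => rfl⟩

theorem add (hf : PeriodicFamily L n f) (hg : PeriodicFamily L n g) :
    PeriodicFamily L n (fun p x => f p x + g p x) :=
  ⟨hf.1.add hg.1, fun p => (hf.2 p).add (hg.2 p)⟩

theorem sub (hf : PeriodicFamily L n f) (hg : PeriodicFamily L n g) :
    PeriodicFamily L n (fun p x => f p x - g p x) :=
  ⟨hf.1.sub hg.1, fun p => (hf.2 p).sub (hg.2 p)⟩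

theorem mul (hf : PeriodicFamily L n f) (hg : PeriodicFamily L n g) :
    PeriodicFamily L n (fun p x => f p x * g p x) :=
  ⟨hf.1.mul hg.1, fun p => (hf.2 p).mul (hg.2 p)⟩

protected theorem iteratedDeriv (hf : PeriodicFamily L n f) (h : m + k ≤ n) :
    PeriodicFamily L m (fun p => iteratedDeriv k (f p)) :=
  ⟨hf.1.iteratedDeriv h, fun p => periodic_iteratedDeriv (hf.2 p) k⟩

theorem periodicJet (hf : PeriodicFamily L n f) (p : P) :
    PeriodicJet L n (fun k => iteratedDeriv k (f p)) :=
  periodicJet_iteratedDeriv (hf.1.contDiff p) (hf.2 p)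

end PeriodicFamily

theorem quadraticForm_le {q₀ q₁ q₂ C u v F : ℝ} (h₀ : |q₀| ≤ C) (h₁ : |q₁| ≤ C) (h₂ : |q₂| ≤ C)
    (hF : 1 ≤ F) : q₀ * u ^ 2 + q₁ * (u * v) + q₂ * v ^ 2 ≤ 2 * C * (v ^ 2 + F * u ^ 2) := by
  have hC : 0 ≤ C := (abs_nonneg _).trans h₀
  have huv : 2 * |u * v| ≤ u ^ 2 + v ^ 2 := by
    rw [abs_mul, ← sq_abs u, ← sq_abs v]
    linarith [two_mul_le_add_sq |u| |v|]
  calc q₀ * u ^ 2 + q₁ * (u * v) + q₂ * v ^ 2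
      ≤ |q₀| * u ^ 2 + |q₁| * |u * v| + |q₂| * v ^ 2 := by
        rw [← abs_mul q₁]
        gcongr <;> exact le_abs_self _
    _ ≤ C * u ^ 2 + C * |u * v| + C * v ^ 2 := by gcongr
    _ ≤ 2 * C * (v ^ 2 + 1 * u ^ 2) := by
        nlinarith [mul_nonneg hC (sq_nonneg u), mul_nonneg hC (sq_nonneg v)]
    _ ≤ 2 * C * (v ^ 2 + F * u ^ 2) := by gcongr

theorem exists_abs_le_on_rectangle {q : ℝ → ℝ → ℝ} (hq : Continuous (uncurry q))
    (S L : ℝ) : ∃ C, ∀ s ∈ Set.Icc 0 S, ∀ x ∈ Set.Icc 0 L, |q s x| ≤ C := by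
  obtain ⟨C, hC⟩ := (isCompact_Icc (a := (0 : ℝ)) (b := S)).prod
    (isCompact_Icc (a := (0 : ℝ)) (b := L)) |>.exists_bound_of_continuousOn hq.continuousOn
  exact ⟨C, fun s hs x hx => hC (s, x) ⟨hs, hx⟩⟩

theorem eq_zero_of_hasDerivAt_le {E E' : ℝ → ℝ} {C S : ℝ} (hE : ∀ s, HasDerivAt E (E' s) s)
    (hnn : ∀ s ∈ Set.Icc 0 S, 0 ≤ E s) (hle : ∀ s ∈ Set.Icc 0 S, E' s ≤ C * E s) (h0 : E 0 = 0) :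
    ∀ s ∈ Set.Icc 0 S, E s = 0 := by
  intro s hs
  have hbound := le_gronwallBound_of_liminf_deriv_right_le (f := E) (ε := 0)
    (fun s _ => (hE s).continuousAt.continuousWithinAt)
    (fun s _ r hr => ((hE s).hasDerivWithinAt.limsup_slope_le' (by simp) hr).frequently)
    h0.le (fun s hs => by simpa only [add_zero] using hle s ⟨hs.1, hs.2.le⟩) s hs
  rw [gronwallBound_ε0_δ0] at hbound
  exact hbound.antisymm (hnn s hs)

theorem eq_zero_of_sq_le_of_integral_eq_zero {L : ℝ} (hL : 0 < L) {w e : ℝ → ℝ}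
    (hw : Periodic w L) (he : Continuous e) (hle : ∀ x ∈ Set.Icc 0 L, w x ^ 2 ≤ e x)
    (h : ∫ x in 0..L, e x = 0) : w = 0 := by
  ext x
  obtain ⟨y, hy, hxy⟩ := hw.exists_mem_Ico₀ hL x
  rw [hxy, Pi.zero_apply]
  by_contra hne
  have hpos := (sq_pos_of_ne_zero hne).trans_le (hle y (Set.Ico_subset_Icc_self hy))
  exact (intervalIntegral.integral_pos hL he.continuousOn
    (fun z hz => (sq_nonneg _).trans (hle z (Set.Ioc_subset_Icc_self hz)))
    ⟨y, Set.Ico_subset_Icc_self hy, hpos⟩).ne' h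

/-- A linear fifth order operator `-γ ∂ₓ⁵ + c₃ ∂ₓ³ + c₂ ∂ₓ² + c₁ ∂ₓ + c₀` on functions of `x`, with
time-dependent coefficients; only the leading one is constant in `x`. -/
structure FifthOrderOp where
  γ : ℝ → ℝ
  c₃ : ℝ → ℝ → ℝ
  c₂ : ℝ → ℝ → ℝ
  c₁ : ℝ → ℝ → ℝ
  c₀ : ℝ → ℝ → ℝ

namespace FifthOrderOp

/-- The operator applied to `w`, at time `s` and position `x`. -/
noncomputable def apply (A : FifthOrderOp) (w : ℝ → ℝ → ℝ) (s x : ℝ) : ℝ :=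
  -A.γ s * iteratedDeriv 5 (w s) x + A.c₃ s x * iteratedDeriv 3 (w s) x +
    A.c₂ s x * iteratedDeriv 2 (w s) x + A.c₁ s x * iteratedDeriv 1 (w s) x + A.c₀ s x * w s x

/-- Periodicity and the amount of differentiability in `x` that the energy estimate uses. -/
structure IsRegular (L : ℝ) (A : FifthOrderOp) : Prop where
  γ : Continuous A.γ
  c₃ : PeriodicFamily L 2 A.c₃
  c₂ : PeriodicFamily L 1 A.c₂
  c₁ : PeriodicFamily L 1 A.c₁
  c₀ : PeriodicFamily L 1 A.c₀

/-- A weight `F` for the energy `∫ (∂ₓw)² + F w²` of the evolution `∂ₛ w = A w` on `[0, S]`.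
The balance condition makes the terms in `(∂ₓ²w)²` cancel from the energy production. Its right
side must have mean zero over a period, as `F` is periodic. -/
structure IsEnergyWeight (L S : ℝ) (A : FifthOrderOp) (F : ℝ → ℝ → ℝ) : Prop where
  periodicFamily : PeriodicFamily L 4 F
  time : ContDiffFamily 1 (fun x s => F s x)
  balance : ∀ s x, 5 * A.γ s / 2 * iteratedDeriv 1 (F s) x =
    A.c₂ s x - 1 / 2 * iteratedDeriv 1 (A.c₃ s) x
  one_le : ∀ s ∈ Set.Icc 0 S, ∀ x ∈ Set.Icc 0 L, 1 ≤ F s x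

/-- The density `(∂ₓw)² + F w²` of the weighted energy. -/
noncomputable def energyDensity (F w : ℝ → ℝ) (x : ℝ) : ℝ :=
  iteratedDeriv 1 w x ^ 2 + F x * w x ^ 2

variable {L S : ℝ} {A : FifthOrderOp} {w F : ℝ → ℝ → ℝ}

theorem periodicFamily_apply (hA : A.IsRegular L) (hw : PeriodicFamily L 6 w) :
    PeriodicFamily L 1 (A.apply w) :=
  (((((PeriodicFamily.of_param hA.γ.neg).mul (hw.iteratedDeriv (by simp))).add
    ((hA.c₃.mono one_le_two).mul (hw.iteratedDeriv (by simp)))).add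
    (hA.c₂.mul (hw.iteratedDeriv (by simp)))).add
    (hA.c₁.mul (hw.iteratedDeriv (by simp)))).add (hA.c₀.mul (hw.mono (by simp)))

theorem exists_energyProduction_eq_quadraticForm (hA : A.IsRegular L)
    (hF : A.IsEnergyWeight L S F) (hw : PeriodicFamily L 6 w) :
    ∃ q₀ q₁ q₂ : ℝ → ℝ → ℝ,
      Continuous (uncurry q₀) ∧ Continuous (uncurry q₁) ∧ Continuous (uncurry q₂) ∧
      ∀ s, HasPeriodicPrimitive L fun x =>
        (F s x * w s x - iteratedDeriv 2 (w s) x) * A.apply w s x -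
          (q₀ s x * w s x ^ 2 + q₁ s x * (w s x * iteratedDeriv 1 (w s) x) +
            q₂ s x * iteratedDeriv 1 (w s) x ^ 2) := by
  have hF₄ := hF.periodicFamily
  have hFc₃ := (hF₄.mono (m := 2) (by simp)).mul hA.c₃
  have hFc₂ := (hF₄.mono (m := 1) (by simp)).mul hA.c₂
  have hγ : ContDiffFamily 0 (fun s _ : ℝ => A.γ s) := .of_param hA.γ
  have hF₀ := hF₄.1.mono (m := 0) (by simp)
  have hc₂ := hA.c₂.1.mono zero_le_one
  have hc₁ := hA.c₁.1.mono zero_le_one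
  have hc₀ := hA.c₀.1.mono zero_le_one
  refine ⟨fun s x => F s x * A.c₀ s x,
    fun s x => iteratedDeriv 1 (A.c₀ s) x - A.γ s * iteratedDeriv 4 (F s) x +
      iteratedDeriv 2 (fun y => F s y * A.c₃ s y) x -
      iteratedDeriv 1 (fun y => F s y * A.c₂ s y) x + F s x * A.c₁ s x,
    fun s x => 1 / 2 * iteratedDeriv 1 (A.c₁ s) x + A.c₀ s x -
      5 / 2 * (A.γ s * iteratedDeriv 3 (F s) x) +
      3 / 2 * iteratedDeriv 1 (fun y => F s y * A.c₃ s y) x - F s x * A.c₂ s x,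
    (hF₀.mul hc₀).continuous,
    (((((hA.c₀.1.iteratedDeriv (by simp)).sub (hγ.mul (hF₄.1.iteratedDeriv (by simp)))).add
      (hFc₃.1.iteratedDeriv (by simp))).sub (hFc₂.1.iteratedDeriv (by simp))).add
      (hF₀.mul hc₁)).continuous,
    ((((((hA.c₁.1.iteratedDeriv (by simp)).const_mul (1 / 2)).add hc₀).sub
      ((hγ.mul (hF₄.1.iteratedDeriv (by simp))).const_mul (5 / 2))).add
      ((hFc₃.1.iteratedDeriv (by simp)).const_mul (3 / 2))).sub (hF₀.mul hc₂)).continuous,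
    fun s => ?_⟩
  have hws := hw.periodicJet s
  have hww₅ := (hF₄.periodicJet s).exact_mul_five (hws.mono (by simp))
  have hww₃ := (hFc₃.periodicJet s).exact_mul_three (hws.mono (by simp))
  have hww₂ := (hFc₂.periodicJet s).exact_mul_two (hws.mono (by simp))
  have hw₂w₅ := (hws.mono (m := 5) (by simp)).exact_two_mul_five
  have hw₂w₃ := ((hA.c₃.periodicJet s).mono one_le_two).exact_mul_one
    (hws.shift (m := 1) 2 (by simp))
  have hw₁w₂ := (hA.c₁.periodicJet s).exact_mul_one (hws.shift (m := 1) 1 (by simp))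
  have hw₀w₂ := (hA.c₀.periodicJet s).exact_mul_two (hws.mono (by simp))
  refine ((((((hw₂w₅.sub hww₅).const_mul (A.γ s)).add hww₃).add hww₂).sub hw₂w₃).sub
    hw₁w₂).sub hw₀w₂ |>.congr fun x => ?_
  simp only [apply, iteratedDeriv_zero, Nat.reduceAdd]
  linear_combination (-iteratedDeriv 2 (w s) x ^ 2) * hF.balance s x

theorem exists_quadraticForm_le_energyDensity (hF : A.IsEnergyWeight L S F)
    {q₀ q₁ q₂ : ℝ → ℝ → ℝ} (h₀ : Continuous (uncurry q₀)) (h₁ : Continuous (uncurry q₁))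
    (h₂ : Continuous (uncurry q₂)) (w : ℝ → ℝ → ℝ) :
    ∃ C, ∀ s ∈ Set.Icc 0 S, ∀ x ∈ Set.Icc 0 L,
      q₀ s x * w s x ^ 2 + q₁ s x * (w s x * iteratedDeriv 1 (w s) x) +
        q₂ s x * iteratedDeriv 1 (w s) x ^ 2 ≤ C * energyDensity (F s) (w s) x := by
  obtain ⟨C₀, hC₀⟩ := exists_abs_le_on_rectangle h₀ S L
  obtain ⟨C₁, hC₁⟩ := exists_abs_le_on_rectangle h₁ S L
  obtain ⟨C₂, hC₂⟩ := exists_abs_le_on_rectangle h₂ S L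
  exact ⟨2 * (C₀ ⊔ C₁ ⊔ C₂), fun s hs x hx => quadraticForm_le
    ((hC₀ s hs x hx).trans (le_sup_left.trans le_sup_left))
    ((hC₁ s hs x hx).trans (le_sup_right.trans le_sup_left))
    ((hC₂ s hs x hx).trans le_sup_right) (hF.one_le s hs x hx)⟩

/-- The `s`-derivative of `energyDensity (F s) (w s) x` when `∂ₛ w = A w`. -/
noncomputable def energyDensityDeriv (A : FifthOrderOp) (F w : ℝ → ℝ → ℝ) (s x : ℝ) : ℝ :=
  2 * (iteratedDeriv 1 (w s) x * iteratedDeriv 1 (A.apply w s) x) +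
    (deriv (fun σ => F σ x) s * w s x ^ 2 + F s x * (2 * (w s x * A.apply w s x)))

theorem contDiffFamily_energyDensity (hF : A.IsEnergyWeight L S F) (hw : PeriodicFamily L 6 w) :
    ContDiffFamily 0 (fun s => energyDensity (F s) (w s)) :=
  ((hw.1.iteratedDeriv (by simp)).pow 2).add
    ((hF.periodicFamily.1.mono (by simp)).mul ((hw.1.mono (by simp)).pow 2))

theorem contDiffFamily_energyDensityDeriv (hA : A.IsRegular L) (hF : A.IsEnergyWeight L S F)
    (hw : PeriodicFamily L 6 w) : ContDiffFamily 0 (A.energyDensityDeriv F w) := by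
  have hh := (periodicFamily_apply hA hw).1
  have hw₀ := hw.1.mono (m := 0) (by simp)
  have hFs : ContDiffFamily 0 (fun s x => deriv (fun σ => F σ x) s) :=
    hF.time.deriv.continuous.comp continuous_swap
  exact (((hw.1.iteratedDeriv (by simp)).mul (hh.iteratedDeriv (by simp))).const_mul 2).add
    ((hFs.mul (hw₀.pow 2)).add ((hF.periodicFamily.1.mono (by simp)).mul
      ((hw₀.mul (hh.mono zero_le_one)).const_mul 2)))

theorem hasDerivAt_energyDensity (hA : A.IsRegular L) (hF : A.IsEnergyWeight L S F)
    (hw : PeriodicFamily L 6 w) (hev : ∀ s x, HasDerivAt (fun σ => w σ x) (A.apply w s x) s)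
    (s x : ℝ) :
    HasDerivAt (fun σ => energyDensity (F σ) (w σ) x) (A.energyDensityDeriv F w s x) s := by
  have hw₁ := hasDerivAt_iteratedDeriv_of_evolution (hw.1.mono (by simp))
    (periodicFamily_apply hA hw).1 hev s x
  refine ((hw₁.pow 2).add ((hF.time.hasDerivAt x s).mul ((hev s x).pow 2))).congr_deriv ?_
  simp only [energyDensityDeriv, Pi.pow_apply]
  ring

theorem exists_integral_energyDensityDeriv_le (hL : 0 ≤ L) (hA : A.IsRegular L)
    (hF : A.IsEnergyWeight L S F) (hw : PeriodicFamily L 6 w) :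
    ∃ C, ∀ s ∈ Set.Icc 0 S, ∫ x in 0..L, A.energyDensityDeriv F w s x ≤
      C * ∫ x in 0..L, energyDensity (F s) (w s) x := by
  obtain ⟨q₀, q₁, q₂, hq₀, hq₁, hq₂, hq⟩ := exists_energyProduction_eq_quadraticForm hA hF hw
  let Q (s x : ℝ) : ℝ := (deriv (fun σ => F σ x) s + 2 * q₀ s x) * w s x ^ 2 +
    2 * q₁ s x * (w s x * iteratedDeriv 1 (w s) x) + 2 * q₂ s x * iteratedDeriv 1 (w s) x ^ 2
  have hQ₀ : ContDiffFamily 0 (fun s x => deriv (fun σ => F σ x) s + 2 * q₀ s x) :=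
    .add (hF.time.deriv.continuous.comp continuous_swap) (.const_mul (n := 0) 2 hq₀)
  have hQ₁ : ContDiffFamily 0 (fun s x => 2 * q₁ s x) := .const_mul (n := 0) 2 hq₁
  have hQ₂ : ContDiffFamily 0 (fun s x => 2 * q₂ s x) := .const_mul (n := 0) 2 hq₂
  have hw₀ := hw.1.mono (m := 0) (by simp)
  have hw₁ := hw.1.iteratedDeriv (m := 0) (k := 1) (by simp)
  have hQc : ContDiffFamily 0 Q :=
    ((hQ₀.mul (hw₀.pow 2)).add (hQ₁.mul (hw₀.mul hw₁))).add (hQ₂.mul (hw₁.pow 2))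
  have hE'c := contDiffFamily_energyDensityDeriv hA hF hw
  have hEc := contDiffFamily_energyDensity hF hw
  obtain ⟨C, hC⟩ := exists_quadraticForm_le_energyDensity hF hQ₀ hQ₁ hQ₂ w
  refine ⟨C, fun s hs => ?_⟩
  have hexact : HasPeriodicPrimitive L (fun x => A.energyDensityDeriv F w s x - Q s x) := by
    have hw₁h := ((hw.periodicJet s).shift (m := 1) 1 (by simp)).exact_deriv_mul
      ((periodicFamily_apply hA hw).periodicJet s)
    refine ((hw₁h.const_mul 2).add ((hq s).const_mul 2)).congr fun x => ?_
    simp only [energyDensityDeriv, Q, Nat.reduceAdd, iteratedDeriv_zero]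
    ring
  rw [hexact.integral_eq (hE'c.continuous_apply s) (hQc.continuous_apply s),
    ← intervalIntegral.integral_const_mul]
  exact intervalIntegral.integral_mono_on hL ((hQc.continuous_apply s).intervalIntegrable _ _)
    (((hEc.continuous_apply s).const_mul C).intervalIntegrable _ _) (hC s hs)

theorem eq_zero_of_integral_energyDensity_eq_zero (hL : 0 < L) (hF : A.IsEnergyWeight L S F)
    (hw : PeriodicFamily L 6 w) {s : ℝ} (hs : s ∈ Set.Icc 0 S)
    (h : ∫ x in 0..L, energyDensity (F s) (w s) x = 0) : w s = 0 :=
  eq_zero_of_sq_le_of_integral_eq_zero hL (hw.periodic s)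
    ((contDiffFamily_energyDensity hF hw).continuous_apply s)
    (fun x hx => (le_mul_of_one_le_left (sq_nonneg _) (hF.one_le s hs x hx)).trans
      (le_add_of_nonneg_left (sq_nonneg _))) h

theorem eq_zero_of_evolution (hL : 0 < L) (hA : A.IsRegular L) (hF : A.IsEnergyWeight L S F)
    (hw : PeriodicFamily L 6 w) (hev : ∀ s x, HasDerivAt (fun σ => w σ x) (A.apply w s x) s)
    (h0 : w 0 = 0) : ∀ s ∈ Set.Icc 0 S, w s = 0 := by
  obtain ⟨C, hC⟩ := exists_integral_energyDensityDeriv_le hL.le hA hF hw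
  have hE := hasDerivAt_integral_of_continuous 0 L (contDiffFamily_energyDensity hF hw).continuous
    (contDiffFamily_energyDensityDeriv hA hF hw).continuous (hasDerivAt_energyDensity hA hF hw hev)
  have hnonneg (s : ℝ) (hs : s ∈ Set.Icc 0 S) : 0 ≤ ∫ x in 0..L, energyDensity (F s) (w s) x :=
    intervalIntegral.integral_nonneg hL.le fun x hx => add_nonneg (sq_nonneg _)
      (mul_nonneg (zero_le_one.trans (hF.one_le s hs x hx)) (sq_nonneg _))
  have hE0 : ∫ x in 0..L, energyDensity (F 0) (w 0) x = 0 := by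
    simp [energyDensity, h0, Pi.zero_def]
  exact fun s hs => eq_zero_of_integral_energyDensity_eq_zero hL hF hw hs
    (eq_zero_of_hasDerivAt_le hE hnonneg hC hE0 s hs)

end FifthOrderOp

/-- A differential polynomial `Σ_j λ_j (∂ₓ³u)^{a_j} (∂ₓ²u)^{b_j} (∂ₓu)^{c_j} u^{d_j}`. -/
structure DiffPoly (n : ℕ) where
  lam : Fin n → ℝ
  a : Fin n → ℕ
  b : Fin n → ℕ
  c : Fin n → ℕ
  d : Fin n → ℕ

namespace DiffPoly

variable {n : ℕ} (N : DiffPoly n)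

/-- The value at a jet `y`, whose entry `y k` stands for `∂ₓᵏu`. -/
def eval (y : ℕ → ℝ) : ℝ :=
  ∑ j, N.lam j * y 3 ^ N.a j * y 2 ^ N.b j * y 1 ^ N.c j * y 0 ^ N.d j

/-- The partial derivative with respect to `∂ₓ³u`. -/
def pderiv₃ : DiffPoly n := ⟨fun j => N.lam j * N.a j, fun j => N.a j - 1, N.b, N.c, N.d⟩

/-- The partial derivative with respect to `∂ₓ²u`. -/
def pderiv₂ : DiffPoly n := ⟨fun j => N.lam j * N.b j, N.a, fun j => N.b j - 1, N.c, N.d⟩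

/-- The partial derivative with respect to `∂ₓu`. -/
def pderiv₁ : DiffPoly n := ⟨fun j => N.lam j * N.c j, N.a, N.b, fun j => N.c j - 1, N.d⟩

/-- The partial derivative with respect to `u`. -/
def pderiv₀ : DiffPoly n := ⟨fun j => N.lam j * N.d j, N.a, N.b, N.c, fun j => N.d j - 1⟩

/-- The mean value over the segment from the jet `z` to the jet `y`. -/
noncomputable def segmentAverage (y z : ℕ → ℝ) : ℝ :=
  ∫ θ in 0..1, N.eval (fun k => z k + θ * (y k - z k))

/-- The resonance condition `∫ ∂N/∂(∂ₓ²u) = 0` over a period, for all `L`-periodic `C^r`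
functions. -/
def IsNonParabolic (L : ℝ) (r : WithTop ℕ∞) : Prop :=
  ∀ f : ℝ → ℝ, ContDiff ℝ r f → Periodic f L →
    ∫ x in 0..L, N.pderiv₂.eval (fun k => iteratedDeriv k f x) = 0

theorem Nfun_eq_eval (f : ℝ → ℝ) (x : ℝ) :
    Nfun n N.lam N.a N.b N.c N.d f x = N.eval (fun k => iteratedDeriv k f x) := by
  simp only [Nfun, eval, iteratedDeriv_one, iteratedDeriv_zero]

theorem continuous_eval {X : Type*} [TopologicalSpace X] {y : ℕ → X → ℝ}
    (hy : ∀ k ≤ 3, Continuous (y k)) : Continuous (fun p => N.eval (fun k => y k p)) := by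
  have h₃ := hy 3 le_rfl
  have h₂ := hy 2 (by simp)
  have h₁ := hy 1 (by simp)
  have h₀ := hy 0 (by simp)
  unfold eval
  fun_prop

theorem hasDerivAt_eval {y : ℕ → ℝ → ℝ} {y' : ℕ → ℝ} {θ : ℝ}
    (hy : ∀ k, HasDerivAt (y k) (y' k) θ) :
    HasDerivAt (fun τ => N.eval (fun k => y k τ))
      (N.pderiv₃.eval (fun k => y k θ) * y' 3 + N.pderiv₂.eval (fun k => y k θ) * y' 2 +
        N.pderiv₁.eval (fun k => y k θ) * y' 1 + N.pderiv₀.eval (fun k => y k θ) * y' 0) θ := by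
  simp only [eval, pderiv₃, pderiv₂, pderiv₁, pderiv₀]
  refine (HasDerivAt.fun_sum fun j _ =>
    (((((hy 3).pow (N.a j)).const_mul (N.lam j)).mul ((hy 2).pow (N.b j))).mul
      ((hy 1).pow (N.c j))).mul ((hy 0).pow (N.d j))).congr_deriv ?_
  simp only [Finset.sum_mul, ← Finset.sum_add_distrib, Pi.mul_apply, Pi.pow_apply]
  exact Finset.sum_congr rfl fun j _ => by ring

theorem eval_sub_eval (y z : ℕ → ℝ) :
    N.eval y - N.eval z =
      N.pderiv₃.segmentAverage y z * (y 3 - z 3) + N.pderiv₂.segmentAverage y z * (y 2 - z 2) +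
      N.pderiv₁.segmentAverage y z * (y 1 - z 1) + N.pderiv₀.segmentAverage y z * (y 0 - z 0) := by
  have hseg (k : ℕ) (θ : ℝ) : HasDerivAt (fun τ => z k + τ * (y k - z k)) (y k - z k) θ := by
    simpa only [one_mul, id_eq] using ((hasDerivAt_id θ).mul_const (y k - z k)).const_add (z k)
  have hi (M : DiffPoly n) (r : ℝ) : IntervalIntegrable
      (fun θ => M.eval (fun k => z k + θ * (y k - z k)) * r) MeasureTheory.volume 0 1 :=
    ((M.continuous_eval fun k _ => by fun_prop).mul_const r).intervalIntegrable _ _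
  have hftc := intervalIntegral.integral_eq_sub_of_hasDerivAt
    (fun θ _ => N.hasDerivAt_eval fun k => hseg k θ)
    ((((hi _ _).add (hi _ _)).add (hi _ _)).add (hi _ _))
  rw [intervalIntegral.integral_add (((hi _ _).add (hi _ _)).add (hi _ _)) (hi _ _),
    intervalIntegral.integral_add ((hi _ _).add (hi _ _)) (hi _ _),
    intervalIntegral.integral_add (hi _ _) (hi _ _)] at hftc
  simp only [intervalIntegral.integral_mul_const, one_mul, zero_mul, add_zero,
    add_sub_cancel] at hftc
  exact hftc.symm

section Families

variable {P : Type*} [TopologicalSpace P] {m : ℕ} {y z : ℕ → P → ℝ → ℝ}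

theorem contDiffFamily_eval (hy : ∀ k ≤ 3, ContDiffFamily m (y k)) :
    ContDiffFamily m (fun p x => N.eval (fun k => y k p x)) :=
  .sum _ fun j => (((((hy 3 le_rfl).pow (N.a j)).const_mul (N.lam j)).mul
    ((hy 2 (by simp)).pow (N.b j))).mul ((hy 1 (by simp)).pow (N.c j))).mul
    ((hy 0 (by simp)).pow (N.d j))

theorem contDiffFamily_segmentAverage (hy : ∀ k ≤ 3, ContDiffFamily m (y k))
    (hz : ∀ k ≤ 3, ContDiffFamily m (z k)) :
    ContDiffFamily m (fun p x => N.segmentAverage (fun k => y k p x) (fun k => z k p x)) :=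
  .integral (N.contDiffFamily_eval (y := fun k (q : P × ℝ) x =>
      z k q.1 x + q.2 * (y k q.1 x - z k q.1 x)) fun k hk =>
    ((hz k hk).comp_param continuous_fst).add ((ContDiffFamily.of_param continuous_snd).mul
      (((hy k hk).comp_param continuous_fst).sub ((hz k hk).comp_param continuous_fst))))
    continuous_const continuous_const

theorem periodicFamily_segmentAverage {L : ℝ} {f g : P → ℝ → ℝ} (hf : PeriodicFamily L (m + 3) f)
    (hg : PeriodicFamily L (m + 3) g) : PeriodicFamily L m (fun p x =>
      N.segmentAverage (fun k => iteratedDeriv k (f p) x) (fun k => iteratedDeriv k (g p) x)) where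
  contDiffFamily := N.contDiffFamily_segmentAverage (fun k hk => hf.1.iteratedDeriv (by omega))
    (fun k hk => hg.1.iteratedDeriv (by omega))
  periodic p x := by
    simp only [periodic_iteratedDeriv (hf.2 p) _ x, periodic_iteratedDeriv (hg.2 p) _ x]

end Families

variable {N}

theorem IsNonParabolic.integral_segmentAverage_eq_zero {L : ℝ} (hN : N.IsNonParabolic L 3)
    (hL : 0 ≤ L) {f g : ℝ → ℝ} (hf : ContDiff ℝ 3 f) (hg : ContDiff ℝ 3 g) (hfp : Periodic f L)
    (hgp : Periodic g L) :
    ∫ x in 0..L, N.pderiv₂.segmentAverage (fun k => iteratedDeriv k f x)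
      (fun k => iteratedDeriv k g x) = 0 := by
  have hseg (θ x : ℝ) {k : ℕ} (hk : k ≤ 3) : iteratedDeriv k (fun y => g y + θ * (f y - g y)) x =
      iteratedDeriv k g x + θ * (iteratedDeriv k f x - iteratedDeriv k g x) := by
    have hfk : ContDiffAt ℝ k f x := (hf.of_le (by exact_mod_cast hk)).contDiffAt
    have hgk : ContDiffAt ℝ k g x := (hg.of_le (by exact_mod_cast hk)).contDiffAt
    rw [iteratedDeriv_fun_add hgk (contDiffAt_const.mul (hfk.sub hgk)),
      iteratedDeriv_const_mul_field, iteratedDeriv_fun_sub hfk hgk]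
  have hc : Continuous (uncurry fun θ x : ℝ => N.pderiv₂.eval fun k =>
      iteratedDeriv k g x + θ * (iteratedDeriv k f x - iteratedDeriv k g x)) :=
    N.pderiv₂.continuous_eval (X := ℝ × ℝ) (y := fun k q => iteratedDeriv k g q.2 +
        q.1 * (iteratedDeriv k f q.2 - iteratedDeriv k g q.2)) fun k hk => by
      have hfk := hf.continuous_iteratedDeriv k (by exact_mod_cast hk)
      have hgk := hg.continuous_iteratedDeriv k (by exact_mod_cast hk)
      fun_prop
  simp only [segmentAverage]
  rw [← integral_integral_swap_of_continuous hc zero_le_one hL]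
  refine (intervalIntegral.integral_congr fun θ _ => ?_).trans intervalIntegral.integral_zero
  refine Eq.trans ?_ (hN (fun y => g y + θ * (f y - g y)) (hg.add (contDiff_const.mul (hf.sub hg)))
    fun x => by simp only [hfp x, hgp x])
  simp only [eval, hseg θ _ (k := 3) le_rfl, hseg θ _ (k := 2) (by simp),
    hseg θ _ (k := 1) (by simp), hseg θ _ (k := 0) (by simp)]

end DiffPoly

namespace FifthOrderOp

variable {L S : ℝ} {A : FifthOrderOp} {F : ℝ → ℝ → ℝ} {κ : ℝ → ℝ}

/-- The operator `κ(s) A`, which drives an evolution `∂ₜw = A w` after a change of the time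
variable. -/
def timeScale (κ : ℝ → ℝ) (A : FifthOrderOp) : FifthOrderOp where
  γ s := κ s * A.γ s
  c₃ s x := κ s * A.c₃ s x
  c₂ s x := κ s * A.c₂ s x
  c₁ s x := κ s * A.c₁ s x
  c₀ s x := κ s * A.c₀ s x

theorem timeScale_apply (κ : ℝ → ℝ) (A : FifthOrderOp) (w : ℝ → ℝ → ℝ) (s x : ℝ) :
    (A.timeScale κ).apply w s x = κ s * A.apply w s x := by
  simp only [apply, timeScale]
  ring

theorem IsRegular.timeScale (hA : A.IsRegular L) (hκ : Continuous κ) :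
    (A.timeScale κ).IsRegular L where
  γ := hκ.mul hA.γ
  c₃ := (PeriodicFamily.of_param hκ).mul hA.c₃
  c₂ := (PeriodicFamily.of_param hκ).mul hA.c₂
  c₁ := (PeriodicFamily.of_param hκ).mul hA.c₁
  c₀ := (PeriodicFamily.of_param hκ).mul hA.c₀

theorem IsEnergyWeight.timeScale (hF : A.IsEnergyWeight L S F) (κ : ℝ → ℝ) :
    (A.timeScale κ).IsEnergyWeight L S F where
  periodicFamily := hF.periodicFamily
  time := hF.time
  balance s x := by
    simp only [FifthOrderOp.timeScale, iteratedDeriv_const_mul_field]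
    linear_combination κ s * hF.balance s x
  one_le := hF.one_le

theorem exists_isEnergyWeight {γ : ℝ} (hγ : γ ≠ 0) (S : ℝ) (hAγ : ∀ s, A.γ s = γ)
    (h₃ : PeriodicFamily L 4 A.c₃) (h₂ : PeriodicFamily L 3 A.c₂)
    (ht₃ : ContDiffFamily 1 (fun x s => A.c₃ s x)) (ht₂ : ContDiffFamily 1 (fun x s => A.c₂ s x))
    (hmean : ∀ s, ∫ x in 0..L, A.c₂ s x = 0) : ∃ F, A.IsEnergyWeight L S F := by
  let G (s x : ℝ) : ℝ := 2 / (5 * γ) * ((∫ y in 0..x, A.c₂ s y) - 1 / 2 * A.c₃ s x)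
  have hGx (s x : ℝ) : HasDerivAt (G s) (2 / (5 * γ) * (A.c₂ s x - 1 / 2 * deriv (A.c₃ s) x)) x :=
    ((((h₂.1.continuous_apply s).integral_hasStrictDerivAt 0 x).hasDerivAt).sub
      ((h₃.1.hasDerivAt s x).const_mul (1 / 2))).const_mul _
  have hGt : ContDiffFamily 1 (fun x s => G s x) :=
    ((ContDiffFamily.integral (f := fun p s => A.c₂ s p.2) (ht₂.comp_param continuous_snd)
      continuous_const continuous_id).sub (ht₃.const_mul (1 / 2))).const_mul _
  have hGc : Continuous (uncurry G) := hGt.continuous.comp continuous_swap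
  have hG : PeriodicFamily L 4 G := by
    refine ⟨.of_hasDerivAt hGc hGx ((h₂.1.sub (h₃.1.deriv.const_mul (1 / 2))).const_mul _),
      fun s x => ?_⟩
    have hi (u v : ℝ) : IntervalIntegrable (A.c₂ s) MeasureTheory.volume u v :=
      (h₂.1.continuous_apply s).intervalIntegrable u v
    simp only [G, (h₂.2 s).intervalIntegral_add_eq_add 0 x hi, zero_add, hmean, add_zero, h₃.2 s x]
  obtain ⟨C, hC⟩ := exists_abs_le_on_rectangle hGc S L
  refine ⟨fun s x => G s x + (C + 1), ⟨hG.add (.of_param continuous_const),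
    hGt.add (.of_param continuous_const), fun s x => ?_, fun s hs x hx => ?_⟩⟩
  · rw [iteratedDeriv_one, iteratedDeriv_one, ((hGx s x).add_const (C + 1)).deriv, hAγ]
    field_simp
  · linarith [neg_le_of_abs_le (hC s hs x hx)]

end FifthOrderOp

section NonlinearEvolution

variable {n m : ℕ} {γ0 γ1 γ2 L S : ℝ} {N : DiffPoly n} {κ : ℝ → ℝ} {f g : ℝ → ℝ → ℝ}

/-- The right side `-γ₀ ∂ₓ⁵f - γ₁ ∂ₓ³f - γ₂ ∂ₓf + N(f)` of the evolution equation. -/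
noncomputable def vectorField (γ0 γ1 γ2 : ℝ) (N : DiffPoly n) (f : ℝ → ℝ) (x : ℝ) : ℝ :=
  -γ0 * iteratedDeriv 5 f x - γ1 * iteratedDeriv 3 f x - γ2 * iteratedDeriv 1 f x +
    N.eval (fun k => iteratedDeriv k f x)

/-- The linear operator satisfied by the difference of two solutions `f` and `g`. -/
noncomputable def differenceOp (γ0 γ1 γ2 : ℝ) (N : DiffPoly n) (f g : ℝ → ℝ → ℝ) :
    FifthOrderOp where
  γ _ := γ0
  c₃ s x := N.pderiv₃.segmentAverage (fun k => iteratedDeriv k (f s) x)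
    (fun k => iteratedDeriv k (g s) x) - γ1
  c₂ s x := N.pderiv₂.segmentAverage (fun k => iteratedDeriv k (f s) x)
    (fun k => iteratedDeriv k (g s) x)
  c₁ s x := N.pderiv₁.segmentAverage (fun k => iteratedDeriv k (f s) x)
    (fun k => iteratedDeriv k (g s) x) - γ2
  c₀ s x := N.pderiv₀.segmentAverage (fun k => iteratedDeriv k (f s) x)
    (fun k => iteratedDeriv k (g s) x)

theorem contDiffFamily_vectorField {P : Type*} [TopologicalSpace P] {f : P → ℝ → ℝ}
    (hf : ContDiffFamily (m + 5) f) :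
    ContDiffFamily m (fun p => vectorField γ0 γ1 γ2 N (f p)) :=
  ((((hf.iteratedDeriv (by simp)).const_mul _).sub ((hf.iteratedDeriv (by simp)).const_mul _)).sub
    ((hf.iteratedDeriv (by simp)).const_mul _)).add
    (N.contDiffFamily_eval fun k hk => hf.iteratedDeriv (by omega))

theorem vectorField_sub (hf : ContDiffFamily 5 f) (hg : ContDiffFamily 5 g) (s x : ℝ) :
    vectorField γ0 γ1 γ2 N (f s) x - vectorField γ0 γ1 γ2 N (g s) x =
      (differenceOp γ0 γ1 γ2 N f g).apply (fun s x => f s x - g s x) s x := by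
  have hsub {k : ℕ} (hk : k ≤ 5) : iteratedDeriv k (fun y => f s y - g s y) x =
      iteratedDeriv k (f s) x - iteratedDeriv k (g s) x :=
    iteratedDeriv_fun_sub ((hf.mono hk).contDiff s).contDiffAt ((hg.mono hk).contDiff s).contDiffAt
  have hN := N.eval_sub_eval (fun k => iteratedDeriv k (f s) x) (fun k => iteratedDeriv k (g s) x)
  simp only [iteratedDeriv_zero] at hN
  simp only [vectorField, differenceOp, FifthOrderOp.apply]
  rw [hsub le_rfl, hsub (by simp), hsub (by simp), hsub (by simp)]
  linear_combination hN

theorem isRegular_differenceOp (hf : PeriodicFamily L 5 f) (hg : PeriodicFamily L 5 g) :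
    (differenceOp γ0 γ1 γ2 N f g).IsRegular L where
  γ := continuous_const
  c₃ := (N.pderiv₃.periodicFamily_segmentAverage hf hg).sub (.of_param continuous_const)
  c₂ := (N.pderiv₂.periodicFamily_segmentAverage hf hg).mono one_le_two
  c₁ := ((N.pderiv₁.periodicFamily_segmentAverage hf hg).sub
    (.of_param continuous_const)).mono one_le_two
  c₀ := (N.pderiv₀.periodicFamily_segmentAverage hf hg).mono one_le_two

theorem exists_isEnergyWeight_differenceOp (hγ0 : γ0 ≠ 0) (hL : 0 ≤ L) (hN : N.IsNonParabolic L 3)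
    (S : ℝ) (hf : PeriodicFamily L 7 f) (hg : PeriodicFamily L 7 g)
    (hft : ∀ k ≤ 3, ContDiffFamily 1 (fun x s => iteratedDeriv k (f s) x))
    (hgt : ∀ k ≤ 3, ContDiffFamily 1 (fun x s => iteratedDeriv k (g s) x)) :
    ∃ F, (differenceOp γ0 γ1 γ2 N f g).IsEnergyWeight L S F :=
  FifthOrderOp.exists_isEnergyWeight hγ0 S (fun _ => rfl)
    ((N.pderiv₃.periodicFamily_segmentAverage hf hg).sub (.of_param continuous_const))
    ((N.pderiv₂.periodicFamily_segmentAverage hf hg).mono (by simp))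
    ((N.pderiv₃.contDiffFamily_segmentAverage hft hgt).sub (.of_param continuous_const))
    (N.pderiv₂.contDiffFamily_segmentAverage hft hgt)
    fun s => hN.integral_segmentAverage_eq_zero hL ((hf.1.mono (by simp)).contDiff s)
      ((hg.1.mono (by simp)).contDiff s) (hf.2 s) (hg.2 s)

theorem eq_of_evolution (hγ0 : γ0 ≠ 0) (hL : 0 < L) (hN : N.IsNonParabolic L 3)
    (hκ : Continuous κ) (hf : PeriodicFamily L 8 f) (hg : PeriodicFamily L 8 g)
    (hfκ : ∀ s x, HasDerivAt (fun σ => f σ x) (κ s * vectorField γ0 γ1 γ2 N (f s) x) s)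
    (hgκ : ∀ s x, HasDerivAt (fun σ => g σ x) (κ s * vectorField γ0 γ1 γ2 N (g s) x) s)
    (h0 : f 0 = g 0) : ∀ s ∈ Set.Icc 0 S, f s = g s := by
  have htime {v : ℝ → ℝ → ℝ} (hv : PeriodicFamily L 8 v)
      (hvκ : ∀ s x, HasDerivAt (fun σ => v σ x) (κ s * vectorField γ0 γ1 γ2 N (v s) x) s)
      (k : ℕ) (hk : k ≤ 3) : ContDiffFamily 1 (fun x s => iteratedDeriv k (v s) x) :=
    contDiffFamily_iteratedDeriv_time (hv.1.mono (by omega))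
      (((ContDiffFamily.of_param hκ).mul (contDiffFamily_vectorField hv.1)).mono hk) hvκ
  obtain ⟨F, hF⟩ := exists_isEnergyWeight_differenceOp (γ1 := γ1) (γ2 := γ2) hγ0 hL.le hN S
    (hf.mono (by simp)) (hg.mono (by simp)) (htime hf hfκ) (htime hg hgκ)
  have hA := isRegular_differenceOp (γ0 := γ0) (γ1 := γ1) (γ2 := γ2) (N := N)
    (hf.mono (by simp)) (hg.mono (by simp))
  intro s hs
  refine sub_eq_zero.1 (FifthOrderOp.eq_zero_of_evolution hL (hA.timeScale hκ) (hF.timeScale κ)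
    ((hf.sub hg).mono (by simp)) (fun s x => ?_) (sub_eq_zero.2 h0) s hs)
  rw [FifthOrderOp.timeScale_apply, ← vectorField_sub (hf.1.mono (by simp)) (hg.1.mono (by simp)),
    mul_sub]
  exact (hfκ s x).sub (hgκ s x)

end NonlinearEvolution

section Mollify

open scoped ContDiff

variable {h : ℝ} {f : ℝ → ℝ} {n : ℕ}

theorem contDiff_deriv_smoothTransition : ContDiff ℝ ∞ (deriv Real.smoothTransition) :=
  (contDiff_infty_iff_deriv.1 Real.smoothTransition.contDiff).2

theorem deriv_smoothTransition_eq_zero {y : ℝ} (hy : y ∉ Set.Ioo 0 1) :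
    deriv Real.smoothTransition y = 0 := by
  rcases le_or_gt y 0 with hy₀ | hy₀
  · exact IsLocalMin.deriv_eq_zero (.of_forall fun z => by
      rw [Real.smoothTransition.zero_of_nonpos hy₀]
      exact Real.smoothTransition.nonneg z)
  · exact IsLocalMax.deriv_eq_zero (.of_forall fun z => by
      rw [Real.smoothTransition.one_of_one_le (not_lt.1 fun h => hy ⟨hy₀, h⟩)]
      exact Real.smoothTransition.le_one z)

theorem hasDerivAt_smoothTransition (y : ℝ) :
    HasDerivAt Real.smoothTransition (deriv Real.smoothTransition y) y :=
  (Real.smoothTransition.contDiff.differentiable one_ne_zero y).hasDerivAt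

/-- The mollification of `f` at scale `h`, with kernel the derivative of `Real.smoothTransition`.
Negative scales are allowed, and `h = 0` gives back `f`. -/
noncomputable def mollify (h : ℝ) (f : ℝ → ℝ) (x : ℝ) : ℝ :=
  ∫ y in 0..1, deriv Real.smoothTransition y * f (x + h * y)

theorem mollify_zero (f : ℝ → ℝ) : mollify 0 f = f := by
  ext x
  simp only [mollify, zero_mul, add_zero]
  rw [intervalIntegral.integral_mul_const, intervalIntegral.integral_eq_sub_of_hasDerivAt
    (fun y _ => hasDerivAt_smoothTransition y)
    (contDiff_deriv_smoothTransition.continuous.intervalIntegrable _ _),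
    Real.smoothTransition.one, Real.smoothTransition.zero, sub_zero, one_mul]

theorem periodic_mollify {L : ℝ} (hf : Periodic f L) (h : ℝ) : Periodic (mollify h f) L := by
  intro x
  simp only [mollify, add_right_comm x L, hf (x + h * _)]

theorem contDiffFamily_mollify (hf : ContDiff ℝ n f) :
    ContDiffFamily n (fun h => mollify h f) :=
  .integral ((ContDiffFamily.of_param
      (contDiff_deriv_smoothTransition.continuous.comp continuous_snd)).mul
    ((ContDiffFamily.of_contDiff hf).comp_add_right
      (by fun_prop : Continuous fun p : ℝ × ℝ => p.1 * p.2))) continuous_const continuous_const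

theorem mollify_eq_integral (h : ℝ) (f : ℝ → ℝ) (x : ℝ) :
    mollify h f x = ∫ y, deriv Real.smoothTransition y * f (x + h * y) :=
  intervalIntegral.integral_eq_integral_of_support_subset <| Function.support_subset_iff'.2
    fun y hy => by
      rw [deriv_smoothTransition_eq_zero fun h => hy (Set.Ioo_subset_Ioc_self h), zero_mul]

theorem hasCompactSupport_deriv_smoothTransition :
    HasCompactSupport (deriv Real.smoothTransition) :=
  .intro isCompact_Icc fun _ hy =>
    deriv_smoothTransition_eq_zero fun h => hy (Set.Ioo_subset_Icc_self h)

theorem contDiff_mollify (hf : Continuous f) (hh : h ≠ 0) : ContDiff ℝ ∞ (mollify h f) := by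
  have hkernel : HasCompactSupport (fun t => deriv Real.smoothTransition (-h⁻¹ * t)) :=
    hasCompactSupport_deriv_smoothTransition.comp_homeomorph
      (Homeomorph.mulLeft₀ (-h⁻¹) (neg_ne_zero.2 (inv_ne_zero hh)))
  have hconv := hkernel.contDiff_convolution_left (ContinuousLinearMap.mul ℝ ℝ)
    (contDiff_deriv_smoothTransition.comp (contDiff_const.mul contDiff_id))
    (hf.locallyIntegrable (μ := MeasureTheory.volume))
  have hmollify (x : ℝ) : mollify h f x =
      |h|⁻¹ * ∫ t, deriv Real.smoothTransition (-h⁻¹ * t) * f (x - t) := by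
    have hcomp := MeasureTheory.Measure.integral_comp_mul_left
      (fun y => deriv Real.smoothTransition y * f (x + h * y)) (-h⁻¹)
    rw [← mollify_eq_integral, inv_neg, inv_inv, abs_neg, smul_eq_mul] at hcomp
    rw [eq_inv_mul_iff_mul_eq₀ (abs_ne_zero.2 hh), ← hcomp]
    congr! 4 with t
    field_simp
    ring
  rw [funext hmollify]
  exact contDiff_const.mul hconv

theorem eq_zero_of_forall_ne_eq_zero {φ : ℝ → ℝ} (hφ : Continuous φ) (h : ∀ t ≠ 0, φ t = 0) :
    φ 0 = 0 :=
  congrFun (hφ.ext_on (dense_compl_singleton 0) continuous_const h) 0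

theorem DiffPoly.IsNonParabolic.of_smooth {L : ℝ} {m : ℕ} {N : DiffPoly m}
    (hN : N.IsNonParabolic L ∞) : N.IsNonParabolic L 3 := by
  intro f hf hp
  have hc : Continuous fun h => ∫ x in 0..L, N.pderiv₂.eval fun k =>
      iteratedDeriv k (mollify h f) x :=
    continuous_integral_of_continuous (N.pderiv₂.contDiffFamily_eval (m := 0) fun k hk =>
      (contDiffFamily_mollify (n := 3) hf).iteratedDeriv (by omega)).continuous
      continuous_const continuous_const
  simpa only [mollify_zero] using eq_zero_of_forall_ne_eq_zero hc fun h hh =>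
    hN _ (contDiff_mollify hf.continuous hh) (periodic_mollify hp h)

theorem eq_zero_of_forall_integral_mul_eq_zero {L : ℝ} (hL : 0 < L) (hf : Continuous f)
    (hp : Periodic f L) (h : ∀ e : ℝ → ℝ, ContDiff ℝ ∞ e → Periodic e L →
      ∫ x in 0..L, f x * e x = 0) : f = 0 := by
  have hf' : ContDiff ℝ (0 : ℕ) f := contDiff_zero.2 hf
  have hc : Continuous fun h => ∫ x in 0..L, f x * mollify h f x :=
    continuous_integral_of_continuous ((ContDiffFamily.of_contDiff hf').mul
      (contDiffFamily_mollify hf')).continuous continuous_const continuous_const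
  refine eq_zero_of_sq_le_of_integral_eq_zero hL hp (e := fun x => f x ^ 2) (hf.pow 2)
    (fun _ _ => le_rfl) ?_
  simpa only [mollify_zero, ← sq] using eq_zero_of_forall_ne_eq_zero hc fun h' hh =>
    h _ (contDiff_mollify hf hh) (periodic_mollify hp h')

theorem integral_deriv_smoothTransition_mul {A B s : ℝ} (hs : A ≤ s) (hh : 0 < h)
    (hB : s + h ≤ B) (f : ℝ → ℝ) :
    ∫ t in A..B, deriv (fun τ => Real.smoothTransition ((τ - s) / h)) t * f t =
      mollify h f s := by
  have hderiv (t : ℝ) : deriv (fun τ => Real.smoothTransition ((τ - s) / h)) t =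
      deriv Real.smoothTransition ((t - s) / h) * (1 / h) :=
    ((hasDerivAt_smoothTransition _).comp t (((hasDerivAt_id t).sub_const s).div_const h)).deriv
  set g : ℝ → ℝ := fun y => deriv Real.smoothTransition y * f (s + h * y) with hg
  have hrescale (t : ℝ) : deriv (fun τ => Real.smoothTransition ((τ - s) / h)) t * f t =
      h⁻¹ * g ((t - s) / h) := by
    rw [hderiv, hg]
    simp only [mul_div_cancel₀ _ hh.ne', add_sub_cancel]
    ring
  simp only [hrescale]
  rw [intervalIntegral.integral_eq_integral_of_support_subset, MeasureTheory.integral_const_mul,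
    MeasureTheory.integral_sub_right_eq_self (fun t => g (t / h)),
    MeasureTheory.Measure.integral_comp_div, abs_of_pos hh, smul_eq_mul,
    inv_mul_cancel_left₀ hh.ne', mollify_eq_integral]
  refine Function.support_subset_iff'.2 fun t ht => ?_
  have hout : (t - s) / h ∉ Set.Ioo 0 1 := fun hts =>
    ht ⟨by linarith [(div_pos_iff_of_pos_right hh).1 hts.1],
      by linarith [(div_lt_one hh).1 hts.2]⟩
  simp only [hg, deriv_smoothTransition_eq_zero hout, zero_mul, mul_zero]

theorem contDiff_smoothTransition_div (s h : ℝ) :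
    ContDiff ℝ ∞ (fun t => Real.smoothTransition ((t - s) / h)) :=
  Real.smoothTransition.contDiff.comp ((contDiff_id.sub contDiff_const).div_const h)

theorem smoothTransition_div_sub_eq_zero {A B s t : ℝ} (hs : A ≤ s) (hh : 0 < h)
    (hB : s + h ≤ B) (ht : t ∉ Set.Ioo A B) :
    Real.smoothTransition ((t - A) / h) - Real.smoothTransition ((t - s) / h) = 0 := by
  rcases le_or_gt t A with htA | htA
  · rw [Real.smoothTransition.zero_of_nonpos, Real.smoothTransition.zero_of_nonpos,
      sub_self] <;> exact div_nonpos_of_nonpos_of_nonneg (by linarith) hh.le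
  · have htB : B ≤ t := not_lt.1 fun h => ht ⟨htA, h⟩
    rw [Real.smoothTransition.one_of_one_le, Real.smoothTransition.one_of_one_le,
      sub_self] <;> exact (one_le_div hh).2 (by linarith)

theorem mollify_eq_mollify_left {A B s : ℝ} (hf : Continuous f)
    (hweak : ∀ η : ℝ → ℝ, ContDiff ℝ ∞ η → (∀ t ∉ Set.Ioo A B, η t = 0) →
      ∫ t in A..B, deriv η t * f t = 0) (hs : A ≤ s) (hh : 0 < h) (hB : s + h ≤ B) :
    mollify h f s = mollify h f A := by
  have hη := hweak _ ((contDiff_smoothTransition_div A h).sub (contDiff_smoothTransition_div s h))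
    fun t ht => smoothTransition_div_sub_eq_zero hs hh hB ht
  have hstep (r : ℝ) : IntervalIntegrable (fun t =>
      deriv (fun τ => Real.smoothTransition ((τ - r) / h)) t * f t) MeasureTheory.volume A B :=
    (((contDiff_smoothTransition_div r h).continuous_deriv (by simp)).mul hf).intervalIntegrable
      _ _
  rw [← integral_deriv_smoothTransition_mul le_rfl hh (by linarith : A + h ≤ B),
    ← integral_deriv_smoothTransition_mul hs hh hB, eq_comm, ← sub_eq_zero,
    ← intervalIntegral.integral_sub (hstep A) (hstep s), ← hη]
  congr! 2 with t
  rw [← sub_mul, deriv_fun_sub ((contDiff_smoothTransition_div A h).differentiable (by simp) t)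
    ((contDiff_smoothTransition_div s h).differentiable (by simp) t)]

theorem eq_left_of_forall_integral_deriv_mul_eq_zero {A B : ℝ} (hAB : A < B) (hf : Continuous f)
    (h : ∀ η : ℝ → ℝ, ContDiff ℝ ∞ η → (∀ t ∉ Set.Ioo A B, η t = 0) →
      ∫ t in A..B, deriv η t * f t = 0) : ∀ t ∈ Set.Icc A B, f t = f A := by
  have hlim (r : ℝ) : Filter.Tendsto (fun δ => mollify δ f r) (nhdsWithin 0 (Set.Ioi 0))
      (nhds (f r)) := by
    have hcont : Continuous (fun δ => mollify δ f r) :=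
      (contDiffFamily_mollify (contDiff_zero.2 hf : ContDiff ℝ (0 : ℕ) f)).continuous_param r
    simpa only [ContinuousWithinAt, mollify_zero] using hcont.continuousWithinAt (x := 0)
  have hIco : Set.EqOn f (fun _ => f A) (Set.Ico A B) := by
    intro s hs
    refine tendsto_nhds_unique (hlim s) ((hlim A).congr' ?_)
    filter_upwards [Ioc_mem_nhdsGT (sub_pos.2 hs.2)] with δ hδ
    exact (mollify_eq_mollify_left hf h hs.1 hδ.1 (by linarith [hδ.2])).symm
  intro t ht
  rw [← closure_Ico hAB.ne] at ht
  exact hIco.closure hf continuous_const ht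

theorem eq_add_integral_of_forall_integral_eq_zero {A B : ℝ} (hAB : A < B) {q r : ℝ → ℝ}
    (hq : Continuous q) (hr : Continuous r)
    (h : ∀ η : ℝ → ℝ, ContDiff ℝ ∞ η → (∀ t ∉ Set.Ioo A B, η t = 0) →
      ∫ t in A..B, (deriv η t * q t + η t * r t) = 0) :
    ∀ t ∈ Set.Icc A B, q t = q A + ∫ τ in A..t, r τ := by
  have hR (t : ℝ) : HasDerivAt (fun t => ∫ τ in A..t, r τ) (r t) t :=
    intervalIntegral.integral_hasDerivAt_right (hr.intervalIntegrable _ _)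
      hr.stronglyMeasurable.stronglyMeasurableAtFilter hr.continuousAt
  have hRc : Continuous (fun t => ∫ τ in A..t, r τ) :=
    continuous_iff_continuousAt.2 fun t => (hR t).continuousAt
  have hconst := eq_left_of_forall_integral_deriv_mul_eq_zero hAB (hq.sub hRc) fun η hη h0 => by
    have hηc : Continuous (deriv η) := hη.continuous_deriv (by simp)
    have hi {g : ℝ → ℝ} (hg : Continuous g) : IntervalIntegrable
        (fun t => deriv η t * g t + η t * r t) MeasureTheory.volume A B :=
      ((hηc.mul hg).add (hη.continuous.mul hr)).intervalIntegrable _ _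
    have hparts : ∫ t in A..B, (deriv η t * (∫ τ in A..t, r τ) + η t * r t) = 0 := by
      rw [intervalIntegral.integral_deriv_mul_eq_sub
        (fun t _ => (hη.differentiable (by simp) t).hasDerivAt) (fun t _ => hR t)
        (hηc.intervalIntegrable _ _) (hr.intervalIntegrable _ _),
        h0 A (by simp), h0 B (by simp), zero_mul, zero_mul, sub_zero]
    rw [← sub_zero (0 : ℝ)]
    nth_rw 1 [← h η hη h0]
    rw [← hparts, ← intervalIntegral.integral_sub (hi hq) (hi hRc)]
    congr! 2 with t
    simp only [Pi.sub_apply]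
    ring
  intro t ht
  have htA := hconst t ht
  rw [Pi.sub_apply, Pi.sub_apply, intervalIntegral.integral_same] at htA
  linarith

end Mollify

section WeakFormulation

open scoped ContDiff

variable {L : ℝ}

theorem PeriodicJet.exact_mul_sub_mul {u v : ℕ → ℝ → ℝ} (k : ℕ) (hu : PeriodicJet L k u)
    (hv : PeriodicJet L k v) :
    HasPeriodicPrimitive L (fun x => u 0 x * v k x - (-1) ^ k * (u k x * v 0 x)) := by
  induction k generalizing u with
  | zero => exact ⟨0, fun _ => rfl, fun x => (hasDerivAt_const x 0).congr_deriv (by ring)⟩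
  | succ k ih =>
    refine (((hu.mono (Nat.le_add_left 1 k)).exact_deriv_mul (hv.shift k (by omega))).sub
      (ih (hu.shift 1 le_rfl) (hv.mono k.le_succ))).congr fun x => ?_
    rw [zero_add, Nat.add_comm 1 k]
    ring

variable {γ0 γ1 γ2 : ℝ} {n : ℕ} {N : DiffPoly n}

theorem periodic_vectorField {f : ℝ → ℝ} (hf : Periodic f L) :
    Periodic (vectorField γ0 γ1 γ2 N f) L := by
  intro x
  simp only [vectorField, periodic_iteratedDeriv hf _ x]

theorem integral_mul_adjoint_eq {f e : ℝ → ℝ} (hf : ContDiff ℝ 5 f) (hfp : Periodic f L)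
    (he : ContDiff ℝ 5 e) (hep : Periodic e L) (α β : ℝ) :
    ∫ x in 0..L, (f x * (α * e x + γ0 * (β * iteratedDeriv 5 e x) +
        γ1 * (β * iteratedDeriv 3 e x) + γ2 * (β * iteratedDeriv 1 e x)) +
      N.eval (fun k => iteratedDeriv k f x) * (β * e x)) =
    α * (∫ x in 0..L, f x * e x) + β * ∫ x in 0..L, vectorField γ0 γ1 γ2 N f x * e x := by
  have hexact (k : ℕ) (hk : k ≤ 5) :=
    ((periodicJet_iteratedDeriv (n := 5) hf hfp).mono hk).exact_mul_sub_mul k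
      ((periodicJet_iteratedDeriv (n := 5) he hep).mono hk)
  have hf' (k : ℕ) (hk : k ≤ 5) : Continuous (iteratedDeriv k f) :=
    hf.continuous_iteratedDeriv k (by exact_mod_cast hk)
  have he' (k : ℕ) (hk : k ≤ 5) : Continuous (iteratedDeriv k e) :=
    he.continuous_iteratedDeriv k (by exact_mod_cast hk)
  have hN : Continuous (fun x => N.eval (fun k => iteratedDeriv k f x)) :=
    N.continuous_eval fun k hk => hf' k (by omega)
  have hvf : Continuous (vectorField γ0 γ1 γ2 N f) :=
    ((((hf' 5 le_rfl).const_mul _).sub ((hf' 3 (by simp)).const_mul _)).sub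
      ((hf' 1 (by simp)).const_mul _)).add hN
  have hαfe : Continuous (fun x => α * (f x * e x)) := (hf.continuous.mul he.continuous).const_mul α
  have hβve : Continuous (fun x => β * (vectorField γ0 γ1 γ2 N f x * e x)) :=
    (hvf.mul he.continuous).const_mul β
  rw [← intervalIntegral.integral_const_mul, ← intervalIntegral.integral_const_mul,
    ← intervalIntegral.integral_add (hαfe.intervalIntegrable _ _) (hβve.intervalIntegrable _ _)]
  refine HasPeriodicPrimitive.integral_eq ?_ ?_ (hαfe.add hβve)
  · refine (((((hexact 5 le_rfl).const_mul γ0).add ((hexact 3 (by simp)).const_mul γ1)).add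
      ((hexact 1 (by simp)).const_mul γ2)).const_mul β).congr fun x => ?_
    simp only [vectorField, iteratedDeriv_zero]
    ring
  · exact (hf.continuous.mul ((((he.continuous.const_mul _).add
      (((he' 5 le_rfl).const_mul _).const_mul _)).add
      (((he' 3 (by simp)).const_mul _).const_mul _)).add
      (((he' 1 (by simp)).const_mul _).const_mul _))).add (hN.mul (he.continuous.const_mul _))

variable {T₁ T₂ : ℝ} {u U : ℝ → ℝ → ℝ} {lam : Fin n → ℝ} {a b c d : Fin n → ℕ}

theorem IsSolution.congr (h : IsSolution γ0 γ1 γ2 n lam a b c d T₁ T₂ u) (hT : T₁ ≤ T₂)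
    (huU : ∀ t ∈ Set.Icc T₁ T₂, U t = u t) : IsSolution γ0 γ1 γ2 n lam a b c d T₁ T₂ U := by
  refine ⟨fun t ht => huU t ht ▸ h.1 t ht, fun ψ hψ hψp hψ0 => ?_⟩
  refine (intervalIntegral.integral_congr fun t ht => ?_).trans (h.2 ψ hψ hψp hψ0)
  simp only [huU t (Set.uIcc_of_le hT ▸ ht)]

theorem IsSolution.integral_mul_eq
    (h : IsSolution γ0 γ1 γ2 n N.lam N.a N.b N.c N.d T₁ T₂ U) (hT : T₁ < T₂)
    (hU : PeriodicFamily (2 * Real.pi) 5 U) {e : ℝ → ℝ} (he : ContDiff ℝ ∞ e)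
    (hep : Periodic e (2 * Real.pi)) {t : ℝ} (ht : t ∈ Set.Icc T₁ T₂) :
    ∫ x in 0..2 * Real.pi, U t x * e x = (∫ x in 0..2 * Real.pi, U T₁ x * e x) +
      ∫ τ in T₁..t, ∫ x in 0..2 * Real.pi, vectorField γ0 γ1 γ2 N (U τ) x * e x := by
  have hpair {F : ℝ → ℝ → ℝ} (hF : Continuous (uncurry F)) :
      Continuous (fun s => ∫ x in 0..2 * Real.pi, F s x * e x) :=
    continuous_integral_of_continuous (hF.mul (he.continuous.comp continuous_snd))
      continuous_const continuous_const
  refine eq_add_integral_of_forall_integral_eq_zero hT (hpair hU.1.continuous)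
    (hpair (contDiffFamily_vectorField (m := 0) hU.1).continuous) (fun η hη hη0 => ?_) t ht
  refine (intervalIntegral.integral_congr fun s _ => ?_).trans (h.2 (fun s x => η s * e x)
    ((hη.comp contDiff_fst).mul (he.comp contDiff_snd)) (fun s x => congrArg (η s * ·) (hep x))
    fun s hs x => by rw [hη0 s hs, zero_mul])
  have he5 : ContDiff ℝ 5 e := contDiff_infty.1 he 5
  simp only [← integral_mul_adjoint_eq (hU.1.contDiff s) (hU.2 s) he5 hep,
    DiffPoly.Nfun_eq_eval, ← iteratedDeriv_one (f := fun x => η s * e x),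
    iteratedDeriv_const_mul_field, deriv_mul_const_field]

theorem eq_add_integral_of_forall_integral_mul_eq {f g : ℝ → ℝ} {G : ℝ → ℝ → ℝ} (hL : 0 < L)
    (hf : Continuous f) (hfp : Periodic f L) (hg : Continuous g) (hgp : Periodic g L)
    (hG : Continuous (uncurry G)) (hGp : ∀ τ, Periodic (G τ) L) {r t : ℝ} (hrt : r ≤ t)
    (h : ∀ e : ℝ → ℝ, ContDiff ℝ ∞ e → Periodic e L → ∫ x in 0..L, f x * e x =
      (∫ x in 0..L, g x * e x) + ∫ τ in r..t, ∫ x in 0..L, G τ x * e x) :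
    f = fun x => g x + ∫ τ in r..t, G τ x := by
  have hI : Continuous (fun x => ∫ τ in r..t, G τ x) :=
    continuous_integral_of_continuous (f := fun x τ => G τ x) (hG.comp continuous_swap)
      continuous_const continuous_const
  refine sub_eq_zero.1 (eq_zero_of_forall_integral_mul_eq_zero hL (hf.sub (hg.add hI))
    (fun x => ?_) fun e he hep => ?_)
  · simp only [Pi.sub_apply, hfp x, hgp x, hGp _ x]
  · have hi {F : ℝ → ℝ} (hF : Continuous F) : IntervalIntegrable (fun x => F x * e x)
        MeasureTheory.volume 0 L := (hF.mul he.continuous).intervalIntegrable _ _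
    have hswap := integral_integral_swap_of_continuous (F := fun τ x => G τ x * e x)
      (hG.mul (he.continuous.comp continuous_snd)) hrt hL.le
    simp only [intervalIntegral.integral_mul_const] at hswap
    simp only [Pi.sub_apply, sub_mul, add_mul]
    rw [intervalIntegral.integral_sub (hi hf) ((hi hg).add (hi hI)),
      intervalIntegral.integral_add (hi hg) (hi hI), h e he hep, hswap, sub_self]

theorem IsSolution.eq_add_integral
    (h : IsSolution γ0 γ1 γ2 n N.lam N.a N.b N.c N.d T₁ T₂ U) (hT : T₁ < T₂)
    (hU : PeriodicFamily (2 * Real.pi) 5 U) {t : ℝ} (ht : t ∈ Set.Icc T₁ T₂) :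
    U t = fun x => U T₁ x + ∫ τ in T₁..t, vectorField γ0 γ1 γ2 N (U τ) x :=
  eq_add_integral_of_forall_integral_mul_eq Real.two_pi_pos (hU.1.continuous_apply t) (hU.2 t)
    (hU.1.continuous_apply T₁) (hU.2 T₁) (contDiffFamily_vectorField (m := 0) hU.1).continuous
    (fun τ => periodic_vectorField (hU.2 τ)) ht.1
    fun _ he hep => h.integral_mul_eq hT hU he hep ht

theorem IsSolution.hasDerivAt_comp (h : IsSolution γ0 γ1 γ2 n N.lam N.a N.b N.c N.d T₁ T₂ U)
    (hT : T₁ < T₂) (hU : PeriodicFamily (2 * Real.pi) 5 U) {θ θ' : ℝ → ℝ}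
    (hθ : ∀ s, θ s ∈ Set.Icc T₁ T₂) (hθ' : ∀ s, HasDerivAt θ (θ' s) s) (s x : ℝ) :
    HasDerivAt (fun σ => U (θ σ) x) (θ' s * vectorField γ0 γ1 γ2 N (U (θ s)) x) s := by
  have hGc := (contDiffFamily_vectorField (m := 0) (γ0 := γ0) (γ1 := γ1) (γ2 := γ2) (N := N)
    hU.1).continuous_param x
  rw [funext fun σ => congrFun (h.eq_add_integral hT hU (hθ σ)) x, mul_comm]
  exact ((hGc.integral_hasStrictDerivAt T₁ (θ s)).hasDerivAt.comp s (hθ' s)).const_add (U T₁ x)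

end WeakFormulation

section FourierSeries

/-- The real trigonometric monomial `Re (c e^{ikx})`. -/
noncomputable def trigMonomial (c : ℂ) (k : ℤ) (x : ℝ) : ℝ :=
  (c * Complex.exp (Complex.I * k * x)).re

theorem hasDerivAt_trigMonomial (c : ℂ) (k : ℤ) (x : ℝ) :
    HasDerivAt (trigMonomial c k) (trigMonomial (Complex.I * k * c) k x) x := by
  have harg : HasDerivAt (fun y : ℝ => Complex.I * k * (y : ℂ)) (Complex.I * k) x := by
    simpa only [Complex.ofRealCLM_apply, Complex.ofReal_one, mul_one] using
      (Complex.ofRealCLM.hasDerivAt (x := x)).const_mul (Complex.I * (k : ℂ))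
  refine (Complex.reCLM.hasFDerivAt.comp_hasDerivAt x (harg.cexp.const_mul c)).congr_deriv ?_
  rw [Complex.reCLM_apply, trigMonomial, mul_comm (Complex.exp _), ← mul_assoc, mul_comm c]

theorem abs_trigMonomial_le (c : ℂ) (k : ℤ) (x : ℝ) : |trigMonomial c k x| ≤ ‖c‖ := by
  refine (Complex.abs_re_le_norm _).trans_eq ?_
  rw [norm_mul, mul_assoc, mul_comm Complex.I,
    show (k : ℂ) * (x : ℂ) = ((k * x : ℝ) : ℂ) by push_cast; ring,
    Complex.norm_exp_ofReal_mul_I, mul_one]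

section TrigSeries

variable {P : Type*} {c : P → ℤ → ℂ} {B : ℤ → ℝ}

theorem continuous_tsum_trigMonomial [TopologicalSpace P] (hc : ∀ k, Continuous (fun p => c p k))
    (hB : Summable B) (h : ∀ p k, ‖c p k‖ ≤ B k) :
    Continuous (uncurry fun p x => ∑' k, trigMonomial (c p k) k x) := by
  refine continuous_tsum (fun k => ?_) hB
    fun k q => (abs_trigMonomial_le _ k q.2).trans (h q.1 k)
  have := hc k
  unfold trigMonomial
  fun_prop

theorem hasDerivAt_tsum_trigMonomial {c : ℤ → ℂ} (hB : Summable B) (h : ∀ k, ‖c k‖ ≤ B k)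
    (h' : ∀ k : ℤ, ‖Complex.I * k * c k‖ ≤ B k) (x : ℝ) :
    HasDerivAt (fun y => ∑' k, trigMonomial (c k) k y)
      (∑' k, trigMonomial (Complex.I * k * c k) k x) x :=
  hasDerivAt_tsum hB (fun k y => hasDerivAt_trigMonomial (c k) k y)
    (fun k y => (abs_trigMonomial_le _ k y).trans (h' k))
    (.of_norm_bounded hB fun k => (abs_trigMonomial_le (c k) k 0).trans (h k)) x

theorem contDiffFamily_tsum_trigMonomial [TopologicalSpace P] {n : ℕ}
    (hc : ∀ k, Continuous (fun p => c p k)) (hB : Summable B)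
    (h : ∀ m ≤ n, ∀ p (k : ℤ), |(k : ℝ)| ^ m * ‖c p k‖ ≤ B k) :
    ContDiffFamily n (fun p x => ∑' k, trigMonomial (c p k) k x) := by
  have hle (p : P) (k : ℤ) : ‖c p k‖ ≤ B k := by
    simpa only [pow_zero, one_mul] using h 0 n.zero_le p k
  induction n generalizing c with
  | zero => exact continuous_tsum_trigMonomial hc hB hle
  | succ n ih =>
    have h' (m : ℕ) (hm : m ≤ n) (p : P) (k : ℤ) :
        |(k : ℝ)| ^ m * ‖Complex.I * k * c p k‖ ≤ B k := by
      rw [norm_mul, norm_mul, Complex.norm_I, one_mul, Complex.norm_intCast, ← mul_assoc,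
        ← pow_succ]
      exact h (m + 1) (by omega) p k
    have hle' (p : P) (k : ℤ) : ‖Complex.I * k * c p k‖ ≤ B k := by
      simpa only [pow_zero, one_mul] using h' 0 n.zero_le p k
    exact .of_hasDerivAt (continuous_tsum_trigMonomial hc hB hle)
      (fun p => hasDerivAt_tsum_trigMonomial hB (hle p) (hle' p))
      (ih (fun k => (hc k).const_mul _) h' hle')

end TrigSeries

theorem summable_inv_one_add_sq : Summable (fun k : ℤ => (1 + (k : ℝ) ^ 2)⁻¹) := by
  refine Summable.of_norm_bounded_eventually (Real.summable_one_div_int_pow.2 one_lt_two) ?_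
  filter_upwards [(Set.finite_singleton (0 : ℤ)).compl_mem_cofinite] with k hk
  have hk : (0 : ℝ) < (k : ℝ) ^ 2 := by
    have : (k : ℝ) ≠ 0 := by exact_mod_cast hk
    positivity
  rw [Real.norm_of_nonneg (by positivity), ← one_div]
  exact one_div_le_one_div_of_le hk (by linarith)

section

variable {f g : ℝ → ℝ}

theorem fourierCoeff_lift_eq_fc [Fact (0 < 2 * Real.pi)]
    (hp : Periodic (fun y => (f y : ℂ)) (2 * Real.pi)) (k : ℤ) :
    fourierCoeff hp.lift k = fc f k := by
  rw [fourierCoeff_eq_intervalIntegral _ k 0, fc, zero_add, Complex.real_smul, one_div,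
    ← Complex.ofReal_inv]
  refine congrArg _ (intervalIntegral.integral_congr fun y _ => ?_)
  simp only [hp.lift_coe, fourier_coe_apply, smul_eq_mul]
  rw [mul_comm]
  congr 2
  push_cast
  field_simp

theorem hasSum_trigMonomial_fc (hf : Continuous f) (hp : Periodic f (2 * Real.pi))
    (hs : Summable (fc f)) (x : ℝ) : HasSum (fun k => trigMonomial (fc f k) k x) (f x) := by
  have : Fact (0 < 2 * Real.pi) := ⟨Real.two_pi_pos⟩
  have hpC : Periodic (fun y => (f y : ℂ)) (2 * Real.pi) := fun y => congrArg _ (hp y)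
  let F : C(AddCircle (2 * Real.pi), ℂ) :=
    ⟨hpC.lift, continuous_coinduced_dom.2 (Complex.continuous_ofReal.comp hf)⟩
  have hF : fourierCoeff F = fc f := funext (fourierCoeff_lift_eq_fc hpC)
  have hsum := Complex.hasSum_re
    (has_pointwise_sum_fourier_series_of_summable (f := F) (hF ▸ hs) (x : AddCircle (2 * Real.pi)))
  rw [hF, show F x = (f x : ℂ) from hpC.lift_coe x, Complex.ofReal_re] at hsum
  convert hsum using 3 with k
  rw [trigMonomial, fourier_coe_apply, smul_eq_mul]
  congr 3
  push_cast
  field_simp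

theorem fc_sub (hf : Continuous f) (hg : Continuous g) (k : ℤ) :
    fc (fun x => f x - g x) k = fc f k - fc g k := by
  unfold fc
  rw [← mul_sub, ← intervalIntegral.integral_sub (Continuous.intervalIntegrable (by fun_prop) _ _)
    (Continuous.intervalIntegrable (by fun_prop) _ _)]
  simp only [Complex.ofReal_sub, sub_mul]

namespace MemHs

variable {r s m : ℕ} {M : ℝ}

theorem mono (hf : MemHs s f) (h : r ≤ s) : MemHs r f :=
  ⟨hf.1, hf.2.1, hf.2.2.of_nonneg_of_le (fun k => by positivity) fun k => by
    gcongr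
    exact le_add_of_nonneg_right (sq_nonneg _)⟩

theorem sub (hf : MemHs s f) (hg : MemHs s g) : MemHs s (fun x => f x - g x) := by
  refine ⟨hf.1.sub hg.1, hf.2.1.sub hg.2.1, ((hf.2.2.add hg.2.2).mul_left 2).of_nonneg_of_le
    (fun k => by positivity) fun k => ?_⟩
  have hsq : ‖fc f k - fc g k‖ ^ 2 ≤ 2 * (‖fc f k‖ ^ 2 + ‖fc g k‖ ^ 2) :=
    (pow_le_pow_left₀ (norm_nonneg _) (norm_sub_le _ _) 2).trans add_sq_le
  rw [fc_sub hf.1 hg.1, ← mul_add, mul_left_comm]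
  gcongr

theorem mul_norm_fc_sq_le (hf : MemHs s f) (k : ℤ) :
    (1 + (k : ℝ) ^ 2) ^ s * ‖fc f k‖ ^ 2 ≤ hsNorm s f ^ 2 := by
  rw [hsNorm, Real.sq_sqrt (tsum_nonneg fun k => by positivity)]
  exact hf.2.2.le_tsum k fun j _ => by positivity

theorem norm_fc_le (hf : MemHs s f) (k : ℤ) : ‖fc f k‖ ≤ hsNorm s f := by
  refine le_of_sq_le_sq ((le_mul_of_one_le_left (by positivity) (one_le_pow₀ ?_)).trans
    (hf.mul_norm_fc_sq_le k)) (Real.sqrt_nonneg _)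
  exact le_add_of_nonneg_right (sq_nonneg _)

theorem pow_mul_norm_fc_le (hf : MemHs s f) (hm : m + 2 ≤ s) (k : ℤ) :
    |(k : ℝ)| ^ m * ‖fc f k‖ ≤ hsNorm s f * (1 + (k : ℝ) ^ 2)⁻¹ := by
  have hk : |(k : ℝ)| ^ 2 ≤ 1 + (k : ℝ) ^ 2 := by rw [sq_abs]; exact (lt_one_add _).le
  rw [← div_eq_mul_inv, le_div_iff₀ (by positivity)]
  refine le_of_sq_le_sq ?_ (Real.sqrt_nonneg _)
  calc (|(k : ℝ)| ^ m * ‖fc f k‖ * (1 + (k : ℝ) ^ 2)) ^ 2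
      = (|(k : ℝ)| ^ 2) ^ m * (1 + (k : ℝ) ^ 2) ^ 2 * ‖fc f k‖ ^ 2 := by ring
    _ ≤ (1 + (k : ℝ) ^ 2) ^ m * (1 + (k : ℝ) ^ 2) ^ 2 * ‖fc f k‖ ^ 2 := by gcongr
    _ = (1 + (k : ℝ) ^ 2) ^ (m + 2) * ‖fc f k‖ ^ 2 := by rw [pow_add]
    _ ≤ (1 + (k : ℝ) ^ 2) ^ s * ‖fc f k‖ ^ 2 := by
      gcongr
      exact le_add_of_nonneg_right (sq_nonneg _)
    _ ≤ hsNorm s f ^ 2 := hf.mul_norm_fc_sq_le k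

theorem eq_tsum_trigMonomial_fc (hf : MemHs s f) (hs : 2 ≤ s) :
    f = fun x => ∑' k, trigMonomial (fc f k) k x :=
  funext fun x => (hasSum_trigMonomial_fc hf.1 hf.2.1 (.of_norm_bounded
    (summable_inv_one_add_sq.mul_left (hsNorm s f)) fun k => by
      simpa only [pow_zero, one_mul] using hf.pow_mul_norm_fc_le (m := 0) hs k) x).tsum_eq.symm

end MemHs

end

/-- The class `C(A; H^0(𝕋)) ∩ L^∞(A; H^s(𝕋))`. -/
structure BoundedHsPath (s : ℕ) (A : Set ℝ) (u : ℝ → ℝ → ℝ) : Prop where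
  memHs : ∀ t ∈ A, MemHs s (u t)
  bounded : ∃ M : ℝ, ∀ t ∈ A, hsNorm s (u t) ≤ M
  contInHs : ContInHs 0 A u

theorem ContInHs.continuousOn_fc {s : ℕ} {A : Set ℝ} {u : ℝ → ℝ → ℝ} (h : ContInHs s A u)
    (hu : ∀ t ∈ A, MemHs s (u t)) (k : ℤ) : ContinuousOn (fun t => fc (u t) k) A := by
  rw [Metric.continuousOn_iff]
  intro t₀ ht₀ ε hε
  obtain ⟨δ, hδ, hclose⟩ := h t₀ ht₀ ε hε
  refine ⟨δ, hδ, fun t ht htd => lt_of_le_of_lt ?_ (hclose t ht htd)⟩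
  rw [dist_eq_norm, ← fc_sub (hu t ht).1 (hu t₀ ht₀).1]
  exact ((hu t ht).sub (hu t₀ ht₀)).norm_fc_le k

theorem BoundedHsPath.periodicFamily_comp {P : Type*} [TopologicalSpace P] {s n : ℕ} {A : Set ℝ}
    {u : ℝ → ℝ → ℝ} (hu : BoundedHsPath s A u) (hn : n + 2 ≤ s) {θ : P → ℝ} (hθ : Continuous θ)
    (hθA : ∀ p, θ p ∈ A) : PeriodicFamily (2 * Real.pi) n (fun p => u (θ p)) := by
  obtain ⟨M, hM⟩ := hu.bounded
  refine ⟨?_, fun p => (hu.memHs _ (hθA p)).2.1⟩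
  rw [funext fun p => (hu.memHs _ (hθA p)).eq_tsum_trigMonomial_fc (by omega)]
  refine contDiffFamily_tsum_trigMonomial (fun k => ?_) (summable_inv_one_add_sq.mul_left M)
    fun m hm p k => ((hu.memHs _ (hθA p)).pow_mul_norm_fc_le (by omega) k).trans ?_
  · have hmem (t : ℝ) (ht : t ∈ A) : MemHs 0 (u t) := (hu.memHs t ht).mono s.zero_le
    exact (hu.contInHs.continuousOn_fc hmem k).comp_continuous hθ hθA
  · gcongr
    exact hM _ (hθA p)

end FourierSeries

section Uniqueness

open scoped ContDiff

variable {γ0 γ1 γ2 : ℝ} {n : ℕ} {lam : Fin n → ℝ} {a b c d : Fin n → ℕ}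

theorem DiffPoly.integral_pderiv₂_eval (N : DiffPoly n) {f : ℝ → ℝ} (hf : ContDiff ℝ 3 f) :
    ∫ x in 0..2 * Real.pi, N.pderiv₂.eval (fun k => iteratedDeriv k f x) =
      2 * Real.pi * PN n N.lam N.a N.b N.c N.d f := by
  simp only [eval, pderiv₂, PN]
  rw [intervalIntegral.integral_finsetSum
    fun j _ => Continuous.intervalIntegrable (by fun_prop (disch := norm_num)) _ _, Finset.mul_sum]
  refine Finset.sum_congr rfl fun j _ => ?_
  rw [← mul_assoc, mul_div_cancel₀ _ Real.two_pi_pos.ne', ← intervalIntegral.integral_const_mul]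
  simp only [iteratedDeriv_one, iteratedDeriv_zero, mul_assoc]

theorem DiffPoly.isNonParabolic_of_forall_PN_eq_zero (N : DiffPoly n)
    (h : ∀ f : ℝ → ℝ, ContDiff ℝ ∞ f → Periodic f (2 * Real.pi) →
      PN n N.lam N.a N.b N.c N.d f = 0) : N.IsNonParabolic (2 * Real.pi) ∞ :=
  fun f hf hp => by rw [N.integral_pderiv₂_eval (contDiff_infty.1 hf 3), h f hf hp, mul_zero]

theorem IsSolution.hasDerivAt_comp_of_boundedHsPath {T₁ T₂ : ℝ} {u : ℝ → ℝ → ℝ} {s : ℕ}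
    (h : IsSolution γ0 γ1 γ2 n lam a b c d T₁ T₂ u) (hT : T₁ < T₂)
    (hu : BoundedHsPath s (Set.Icc T₁ T₂) u) (hs : 7 ≤ s) {θ θ' : ℝ → ℝ}
    (hθ : ∀ σ, θ σ ∈ Set.Icc T₁ T₂) (hθ' : ∀ σ, HasDerivAt θ (θ' σ) σ) (σ x : ℝ) :
    HasDerivAt (fun σ => u (θ σ) x)
      (θ' σ * vectorField γ0 γ1 γ2 ⟨lam, a, b, c, d⟩ (u (θ σ)) x) σ := by
  have hproj (t : ℝ) (ht : t ∈ Set.Icc T₁ T₂) : u (Set.projIcc T₁ T₂ hT.le t) = u t := by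
    rw [Set.projIcc_of_mem hT.le ht]
  have hU : PeriodicFamily (2 * Real.pi) 5 (fun t => u (Set.projIcc T₁ T₂ hT.le t)) :=
    hu.periodicFamily_comp hs (continuous_subtype_val.comp continuous_projIcc)
      fun t => (Set.projIcc T₁ T₂ hT.le t).2
  have hder := (h.congr hT.le hproj).hasDerivAt_comp (N := ⟨lam, a, b, c, d⟩) hT hU hθ hθ' σ x
  simpa only [hproj _ (hθ _)] using hder

theorem exists_mem_Icc_mul_sin_eq {T t : ℝ} (hT : 0 < T) (ht : t ∈ Set.Icc (-T) T) :
    ∃ s ∈ Set.Icc 0 (2 * Real.pi), T * Real.sin s = t := by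
  have hlow : -1 ≤ t / T := by rw [le_div_iff₀ hT]; linarith [ht.1]
  have hupp : t / T ≤ 1 := by rw [div_le_iff₀ hT]; linarith [ht.2]
  have hneg := Real.neg_pi_div_two_le_arcsin (t / T)
  have hpos := Real.arcsin_le_pi_div_two (t / T)
  refine ⟨Real.pi - Real.arcsin (t / T), ⟨?_, ?_⟩, ?_⟩
  · linarith [Real.pi_pos]
  · linarith
  · rw [Real.sin_pi_sub, Real.sin_arcsin hlow hupp, mul_div_cancel₀ _ hT.ne']

theorem lwp_nonparabolic_uniqueness_general (hγ0 : γ0 ≠ 0)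
    (hPN : ∀ f : ℝ → ℝ, ContDiff ℝ ∞ f → Periodic f (2 * Real.pi) → PN n lam a b c d f = 0)
    {T : ℝ} (hT : 0 < T) {u₁ u₂ : ℝ → ℝ → ℝ}
    (hsol₁ : IsSolution γ0 γ1 γ2 n lam a b c d (-T) T u₁)
    (hsol₂ : IsSolution γ0 γ1 γ2 n lam a b c d (-T) T u₂) {s : ℕ} (hs : 10 ≤ s)
    (hu₁ : BoundedHsPath s (Set.Icc (-T) T) u₁) (hu₂ : BoundedHsPath s (Set.Icc (-T) T) u₂)
    (hinit : u₁ 0 = u₂ 0) : ∀ t ∈ Set.Icc (-T) T, ∀ x : ℝ, u₁ t x = u₂ t x := by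
  intro t ht x
  -- `s ↦ T sin s` sweeps out both time directions while `s` moves forward from `0`.
  obtain ⟨τ, hτ, rfl⟩ := exists_mem_Icc_mul_sin_eq hT ht
  have hsin (σ : ℝ) : T * Real.sin σ ∈ Set.Icc (-T) T :=
    abs_le.1 (by
      rw [abs_mul, abs_of_pos hT]
      exact mul_le_of_le_one_right hT.le (Real.abs_sin_le_one σ))
  have hsin' (σ : ℝ) : HasDerivAt (fun σ => T * Real.sin σ) (T * Real.cos σ) σ :=
    (Real.hasDerivAt_sin σ).const_mul T
  have hlt : -T < T := neg_lt_self hT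
  have hN := (DiffPoly.isNonParabolic_of_forall_PN_eq_zero ⟨lam, a, b, c, d⟩ hPN).of_smooth
  exact congrFun (eq_of_evolution (f := fun σ => u₁ (T * Real.sin σ))
    (g := fun σ => u₂ (T * Real.sin σ)) hγ0 Real.two_pi_pos hN
    (Real.continuous_cos.const_mul T)
    (hu₁.periodicFamily_comp hs (Real.continuous_sin.const_mul T) hsin)
    (hu₂.periodicFamily_comp hs (Real.continuous_sin.const_mul T) hsin)
    (hsol₁.hasDerivAt_comp_of_boundedHsPath hlt hu₁ (by omega) hsin hsin')
    (hsol₂.hasDerivAt_comp_of_boundedHsPath hlt hu₂ (by omega) hsin hsin')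
    (by simpa only [Real.sin_zero, mul_zero] using hinit) τ hτ) x

end Uniqueness

/-- **Uniqueness for non-parabolic resonance type.**
If `P_N ≡ 0` (on smooth periodic functions), and `u₁, u₂ ∈ C([-T,T];L²) ∩ L^∞([-T,T];H^{12})`
are solutions with the same initial datum `φ ∈ H^{12}(𝕋)`, then `u₁ = u₂` on `[-T,T]`. -/
theorem lwp_nonparabolic_uniqueness
    (γ0 γ1 γ2 : ℝ) (hγ0 : γ0 ≠ 0)
    (j0 : ℕ) (lam : Fin j0 → ℝ) (a b c d : Fin j0 → ℕ)
    (hp : ∀ j : Fin j0, 2 ≤ a j + b j + c j + d j)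
    (hPN : ∀ f : ℝ → ℝ, ContDiff ℝ (⊤ : ℕ∞) f → Function.Periodic f (2 * Real.pi) →
      PN j0 lam a b c d f = 0)
    (T : ℝ) (hT : 0 < T) (φ : ℝ → ℝ) (hφ : MemHs 12 φ)
    (u₁ u₂ : ℝ → ℝ → ℝ)
    (hsol₁ : IsSolution γ0 γ1 γ2 j0 lam a b c d (-T) T u₁)
    (hsol₂ : IsSolution γ0 γ1 γ2 j0 lam a b c d (-T) T u₂)
    (hmem₁ : ∀ t ∈ Set.Icc (-T) T, MemHs 12 (u₁ t))
    (hmem₂ : ∀ t ∈ Set.Icc (-T) T, MemHs 12 (u₂ t))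
    (hbdd₁ : ∃ M : ℝ, ∀ t ∈ Set.Icc (-T) T, hsNorm 12 (u₁ t) ≤ M)
    (hbdd₂ : ∃ M : ℝ, ∀ t ∈ Set.Icc (-T) T, hsNorm 12 (u₂ t) ≤ M)
    (hcont₁ : ContInHs 0 (Set.Icc (-T) T) u₁)
    (hcont₂ : ContInHs 0 (Set.Icc (-T) T) u₂)
    (hinit₁ : u₁ 0 = φ) (hinit₂ : u₂ 0 = φ) :
    ∀ t ∈ Set.Icc (-T) T, ∀ x : ℝ, u₁ t x = u₂ t x :=
  lwp_nonparabolic_uniqueness_general hγ0 hPN hT hsol₁ hsol₂ (by simp) ⟨hmem₁, hbdd₁, hcont₁⟩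
    ⟨hmem₂, hbdd₂, hcont₂⟩ (hinit₁.trans hinit₂.symm)

end FifthOrderStmt1
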